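/- The HCPP instance I_φ=(G,ω,𝒫,≺) produced by the construction from a 3-CNF formula φ admits a tight tour if and only if φ is satisfiable. -/

import Mathlib

namespace HCPPFormal

variable {V : Type} [DecidableEq V]

/-- The degree of a vertex in a multigraph given as a multiset of edges
(loops count twice, multiplicities are counted). -/
def mDeg (M : Multiset (Sym2 V)) (v : V) : ℕ :=
  (M.map fun e => if e = Sym2.diag v then 2 else if v ∈ e then 1 else 0).sum

/-- The vertex set of the multigraph induced by a multiset of edges. -/
def mVerts (M : Multiset (Sym2 V)) : Set V := {v | ∃ e ∈ M, v ∈ e}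

/-- Adjacency in the multigraph induced by a multiset of edges. -/
def mAdj (M : Multiset (Sym2 V)) (a b : V) : Prop := s(a, b) ∈ M

/-- The multigraph induced by a multiset of edges is connected. -/
def mConnected (M : Multiset (Sym2 V)) : Prop :=
  ∀ u ∈ mVerts M, ∀ v ∈ mVerts M, Relation.ReflTransGen (mAdj M) u v

/-- The list of edges traversed by a walk, given as its list of vertices. -/
def walkEdgeList (w : List V) : List (Sym2 V) :=
  (w.zip w.tail).map fun p => s(p.1, p.2)

/-- The multiset of edges traversed by a walk (with multiplicities). -/
def walkEdges (w : List V) : Multiset (Sym2 V) :=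
  (walkEdgeList w : Multiset (Sym2 V))

/-- The weight of a multiset of edges. -/
def mWeight (ω : Sym2 V → ℕ) (M : Multiset (Sym2 V)) : ℕ := (M.map ω).sum

/-- The weight of a walk. -/
def wWeight (ω : Sym2 V → ℕ) (w : List V) : ℕ := mWeight ω (walkEdges w)

/-- A multiset `M` of edges is a perfect matching on the vertex set `U`:
it is a set of pairwise vertex-disjoint non-loop edges
whose endpoints are exactly the vertices of `U`. -/
def IsPerfectMatchingOn (M : Multiset (Sym2 V)) (U : Set V) : Prop :=
  M.Nodup ∧ (∀ e ∈ M, ¬ e.IsDiag) ∧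
  (∀ e ∈ M, ∀ e' ∈ M, e ≠ e' → ∀ v : V, v ∈ e → v ∉ e') ∧
  mVerts M = U



/-- Vertices of the graph constructed from a 3-CNF formula:
`t i l`, `z i l`, `f i l` are the vertices `t_i^ℓ`, `z_i^ℓ`, `f_i^ℓ`;
`cs` is the vertex `c*`; `c1 j`, `c2 j` are `c_j¹`, `c_j²`;
`a i j`, `b i j` are the auxiliary vertices `a_{ij}`, `b_{ij}`. -/
inductive V3 : Type where
  | t (i l : ℕ) : V3
  | z (i l : ℕ) : V3
  | f (i l : ℕ) : V3
  | cs : V3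
  | c1 (j : ℕ) : V3
  | c2 (j : ℕ) : V3
  | a (i j : ℕ) : V3
  | b (i j : ℕ) : V3
deriving DecidableEq

/-- A 3-CNF formula with variables `0, …, n-1` and clauses `0, …, m-1`;
the pair `(i, true)` represents the literal `x_i` and `(i, false)` represents `¬x_i`.
Each clause has at most three literals, and no clause contains
both a variable and its negation. -/
structure CNF3 : Type where
  n : ℕ
  m : ℕ
  clause : ℕ → Finset (ℕ × Bool)
  size_le : ∀ j < m, (clause j).card ≤ 3
  var_lt : ∀ j < m, ∀ p ∈ clause j, p.1 < n
  no_taut : ∀ j < m, ∀ i : ℕ, ¬ ((i, true) ∈ clause j ∧ (i, false) ∈ clause j)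

/-- The clauses containing the variable `x_i` (positively or negatively). -/
def occ (φ : CNF3) (i : ℕ) : Finset ℕ :=
  (Finset.range φ.m).filter fun j => (i, true) ∈ φ.clause j ∨ (i, false) ∈ φ.clause j

/-- `μ φ i` is the number of clauses containing `x_i` or `¬x_i`. -/
def μ (φ : CNF3) (i : ℕ) : ℕ := (occ φ i).card

/-- `posOf φ i j` is the (1-based) position `ℓ` such that clause `j` is
the `ℓ`-th clause containing `x_i` or `¬x_i`. -/
def posOf (φ : CNF3) (i j : ℕ) : ℕ := ((occ φ i).filter fun j' => j' ≤ j).card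

/-- The edges of the cycle `X_i`. -/
def Xedges (φ : CNF3) (i : ℕ) : Finset (Sym2 V3) :=
  ((Finset.Ico 1 (6 * μ φ i)).image fun l => s(V3.t i l, V3.t i (l + 1))) ∪
  ((Finset.Ico 1 (6 * μ φ i)).image fun l => s(V3.f i l, V3.f i (l + 1))) ∪
  {s(V3.t i (6 * μ φ i), V3.f i (6 * μ φ i)), s(V3.f i 1, V3.t i 1)}

/-- The edges of the cycle `Y_{i i'}` where `i' = (i mod n) + 1` (0-based: `(i+1) % n`). -/
def Yedges (φ : CNF3) (i : ℕ) : Finset (Sym2 V3) :=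
  {s(V3.t i (6 * μ φ i), V3.f ((i + 1) % φ.n) 1),
   s(V3.f ((i + 1) % φ.n) 1, V3.f i (6 * μ φ i)),
   s(V3.f i (6 * μ φ i), V3.t ((i + 1) % φ.n) 1),
   s(V3.t ((i + 1) % φ.n) 1, V3.t i (6 * μ φ i))}

/-- The edges of the cycle `Z_{ij}` (for a positive occurrence of `x_i` in clause `C_j`). -/
def Zedges (φ : CNF3) (i j : ℕ) : Finset (Sym2 V3) :=
  {s(V3.t i (6 * posOf φ i j - 3), V3.c1 j),
   s(V3.c1 j, V3.a i j),
   s(V3.a i j, V3.c2 j),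
   s(V3.c2 j, V3.t i (6 * posOf φ i j - 2)),
   s(V3.t i (6 * posOf φ i j - 2), V3.b i j),
   s(V3.b i j, V3.t i (6 * posOf φ i j - 3))}

/-- The edges of the cycle `Z̄_{ij}` (for a negative occurrence of `¬x_i` in clause `C_j`). -/
def Zbedges (φ : CNF3) (i j : ℕ) : Finset (Sym2 V3) :=
  {s(V3.f i (6 * posOf φ i j - 3), V3.c1 j),
   s(V3.c1 j, V3.a i j),
   s(V3.a i j, V3.c2 j),
   s(V3.c2 j, V3.f i (6 * posOf φ i j - 2)),
   s(V3.f i (6 * posOf φ i j - 2), V3.b i j),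
   s(V3.b i j, V3.f i (6 * posOf φ i j - 3))}

/-- The edge class `E_0`: all edges of all cycles `X_i`, `Y_{ii'}`, `Z_{ij}`, `Z̄_{ij}`. -/
def E0 (φ : CNF3) : Finset (Sym2 V3) :=
  ((Finset.range φ.n).biUnion fun i => Xedges φ i) ∪
  ((Finset.range φ.n).biUnion fun i => Yedges φ i) ∪
  ((Finset.range φ.m).biUnion fun j =>
    (φ.clause j).biUnion fun p => if p.2 then Zedges φ p.1 j else Zbedges φ p.1 j)

/-- The edge class `E_i^ℓ`: the edges of the path `P_i^ℓ = (t_i^ℓ, z_i^ℓ, f_i^ℓ)`. -/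
def Epl (φ : CNF3) (i l : ℕ) : Finset (Sym2 V3) :=
  {s(V3.t i l, V3.z i l), s(V3.z i l, V3.f i l)}

/-- The edge class `E*`: all edges incident to `c*`,
i.e. the edges of the paths `(c_j¹, c*, c_j²)`. -/
def Estar (φ : CNF3) : Finset (Sym2 V3) :=
  (Finset.range φ.m).biUnion fun j => {s(V3.c1 j, V3.cs), s(V3.cs, V3.c2 j)}

/-- All edges of the constructed graph `G`. -/
def Eall (φ : CNF3) : Finset (Sym2 V3) :=
  E0 φ ∪ Estar φ ∪
  ((Finset.range φ.n).biUnion fun i => (Finset.Icc 1 (6 * μ φ i)).biUnion fun l => Epl φ i l)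

/-- The vertex set `V_FT` of all vertices `t_i^ℓ` and `f_i^ℓ`. -/
def VFT (φ : CNF3) : Set V3 :=
  {v | ∃ i < φ.n, ∃ l : ℕ, 1 ≤ l ∧ l ≤ 6 * μ φ i ∧ (v = V3.t i l ∨ v = V3.f i l)}

/-- The vertex set `V_C` of all vertices `c_j¹` and `c_j²`. -/
def VC (φ : CNF3) : Set V3 :=
  {v | ∃ j < φ.m, v = V3.c1 j ∨ v = V3.c2 j}


/-- Indices for the edge classes of the constructed instance:
`e0` for `E_0`, `pl i l` for `E_i^ℓ`, `star` for `E*`. -/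
inductive CI : Type where
  | e0 : CI
  | pl (i l : ℕ) : CI
  | star : CI
deriving DecidableEq

/-- The edge class with a given index. -/
def classEdges (φ : CNF3) : CI → Finset (Sym2 V3)
  | .e0 => E0 φ
  | .pl i l => Epl φ i l
  | .star => Estar φ

/-- The class indices actually occurring in the constructed instance. -/
def validCI (φ : CNF3) : CI → Prop
  | .e0 => True
  | .pl i l => i < φ.n ∧ 1 ≤ l ∧ l ≤ 6 * μ φ i
  | .star => True

/-- The (strict) precedence order on the classes: `E_0` precedes every `E_i^ℓ`,
the classes `E_i^ℓ` are ordered lexicographically, and `E*` is incomparable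
to all other classes. -/
def prec : CI → CI → Prop
  | .e0, .pl _ _ => True
  | .pl i l, .pl i' l' => i < i' ∨ (i = i' ∧ l < l')
  | _, _ => False

/-- A list of traversed edges respects the precedence constraints: whenever the
edge traversed at step `q` belongs to a class `A`, every edge of every class
`B ≺ A` has already been traversed at some earlier step `p < q`. -/
def PrecRespecting (φ : CNF3) (L : List (Sym2 V3)) : Prop :=
  ∀ (q : ℕ) (hq : q < L.length) (A : CI), validCI φ A → L.get ⟨q, hq⟩ ∈ classEdges φ A →
    ∀ B : CI, validCI φ B → prec B A → ∀ e ∈ classEdges φ B,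
      ∃ (p : ℕ) (hp : p < L.length), p < q ∧ L.get ⟨p, hp⟩ = e

/-- A feasible solution for the constructed HCPP instance: a closed walk in `G`
traversing every edge at least once and respecting the precedence constraints. -/
def FeasibleTour (φ : CNF3) (T : List V3) : Prop :=
  T ≠ [] ∧ T.Chain' (fun a b => s(a, b) ∈ Eall φ) ∧ T.head? = T.getLast? ∧
  (∀ e ∈ Eall φ, e ∈ walkEdges T) ∧ PrecRespecting φ (walkEdgeList T)

/-- The number `b` of imbalanced vertices of the constructed graph `G`. -/
noncomputable def imb (φ : CNF3) : ℕ := Nat.card {v : V3 // ¬ Even (mDeg (Eall φ).val v)}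

/-- A tight tour: a feasible solution of weight at most `|E| + b/2`
(all edges have weight one, so the weight is the number of edge traversals). -/
def IsTightTour (φ : CNF3) (T : List V3) : Prop :=
  FeasibleTour φ T ∧
  ((Multiset.card (walkEdges T) : ℚ) ≤ (Eall φ).card + (imb φ : ℚ) / 2)

/-- A 3-CNF formula is satisfiable: some truth assignment to the variables
satisfies every clause. -/
def Satisfiable (φ : CNF3) : Prop :=
  ∃ σ : ℕ → Bool, ∀ j < φ.m, ∃ p ∈ φ.clause j, σ p.1 = p.2

set_option linter.unusedSectionVars false

/-- `Trail u L v`: the edge list `L` is traversed by a walk from `u` to `v`. -/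
inductive Trail : V → List (Sym2 V) → V → Prop
  | nil (u : V) : Trail u [] u
  | cons (u : V) (x v : V) (L : List (Sym2 V)) : Trail x L v → Trail u (s(u, x) :: L) v

theorem Trail.append {u v w : V} {L L' : List (Sym2 V)} (h : Trail u L v) (h' : Trail v L' w) :
    Trail u (L ++ L') w := by
  induction h with
  | nil u => simpa using h'
  | cons u x v L _ ih => exact Trail.cons _ _ _ _ (ih h')

theorem Trail.single (u v : V) : Trail u [s(u, v)] v := .cons _ _ _ _ (.nil _)

theorem Trail.reverse {u v : V} {L : List (Sym2 V)} (h : Trail u L v) :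
    Trail v L.reverse u := by
  induction h with
  | nil u => exact .nil _
  | cons u x v L _ ih =>
    rw [List.reverse_cons]
    refine ih.append ?_
    rw [Sym2.eq_swap]
    exact .single _ _

theorem Trail.split {u w : V} {L L' : List (Sym2 V)} (h : Trail u (L ++ L') w) :
    ∃ v, Trail u L v ∧ Trail v L' w := by
  induction L generalizing u with
  | nil => exact ⟨u, .nil _, h⟩
  | cons e L ih =>
    cases h with
    | cons _ x _ _ h =>
      obtain ⟨v, h1, h2⟩ := ih h
      exact ⟨v, .cons _ _ _ _ h1, h2⟩

theorem Trail.cons_inv {u w : V} {e : Sym2 V} {L : List (Sym2 V)} (h : Trail u (e :: L) w) :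
    ∃ x, e = s(u, x) ∧ Trail x L w := by
  cases h with
  | cons _ x _ _ h => exact ⟨x, rfl, h⟩

theorem Trail.nil_inv {u w : V} (h : Trail u [] w) : u = w := by
  cases h; rfl

theorem Trail.concat_inv {u w : V} {e : Sym2 V} {L : List (Sym2 V)} (h : Trail u (L ++ [e]) w) :
    ∃ x, e = s(x, w) ∧ Trail u L x := by
  obtain ⟨v, h1, h2⟩ := h.split
  obtain ⟨x, rfl, h3⟩ := h2.cons_inv
  obtain rfl := h3.nil_inv
  exact ⟨v, rfl, h1⟩

/-- Every vertex on an edge of a trail splits the trail. -/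
theorem Trail.split_at {u w v : V} {L : List (Sym2 V)} (h : Trail u L w)
    (hv : ∃ e ∈ L, v ∈ e) : ∃ A B, L = A ++ B ∧ Trail u A v ∧ Trail v B w := by
  induction h with
  | nil u => simp at hv
  | cons u x w L h ih =>
    obtain ⟨e, he, hve⟩ := hv
    rcases List.mem_cons.1 he with rfl | he
    · rcases Sym2.mem_iff.1 hve with rfl | rfl
      · exact ⟨[], _, rfl, .nil _, .cons _ _ _ _ h⟩
      · exact ⟨[s(u, v)], L, rfl, .single _ _, h⟩
    · obtain ⟨A, B, rfl, h1, h2⟩ := ih ⟨e, he, hve⟩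
      exact ⟨s(u, x) :: A, B, rfl, .cons _ _ _ _ h1, h2⟩

/-- There is a closed walk through `u` whose multiset of edges is exactly `S`. -/
def Circ (u : V) (S : Multiset (Sym2 V)) : Prop := ∃ L, Trail u L u ∧ (L : Multiset (Sym2 V)) = S

theorem Circ.rotate {u v : V} {S : Multiset (Sym2 V)} (h : Circ u S) (hv : v ∈ mVerts S) :
    Circ v S := by
  obtain ⟨L, h, rfl⟩ := h
  obtain ⟨A, B, rfl, h1, h2⟩ := h.split_at (v := v) (by simpa [mVerts] using hv)
  refine ⟨B ++ A, h2.append h1, ?_⟩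
  rw [Multiset.coe_eq_coe]
  exact List.perm_append_comm

theorem Circ.add {u v : V} {S S' : Multiset (Sym2 V)} (h : Circ u S) (hv : v ∈ mVerts S)
    (h' : Circ v S') : Circ u (S + S') := by
  obtain ⟨L, h, rfl⟩ := h
  obtain ⟨L', h', rfl⟩ := h'
  obtain ⟨A, B, rfl, h1, h2⟩ := h.split_at (v := v) (by simpa [mVerts] using hv)
  refine ⟨A ++ (L' ++ B), h1.append (h'.append h2), ?_⟩
  simp only [← Multiset.coe_add]
  abel

theorem Circ.union {u v : V} {S S' : Finset (Sym2 V)} (h : Circ u S.val)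
    (hv : ∃ e ∈ S, v ∈ e) (h' : Circ v S'.val) (hd : Disjoint S S') : Circ u (S ∪ S').val := by
  rw [← Finset.disjUnion_eq_union _ _ hd]
  exact h.add (by simpa [mVerts] using hv) h'

theorem mDeg_add (M N : Multiset (Sym2 V)) (v : V) : mDeg (M + N) v = mDeg M v + mDeg N v := by
  simp [mDeg]

theorem mDeg_zero (v : V) : mDeg (0 : Multiset (Sym2 V)) v = 0 := by
  simp [mDeg]

theorem mDeg_cons (e : Sym2 V) (M : Multiset (Sym2 V)) (v : V) :
    mDeg (e ::ₘ M) v = (if e = Sym2.diag v then 2 else if v ∈ e then 1 else 0) + mDeg M v := by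
  simp [mDeg]

theorem edge_deg (a b v : V) :
    (if s(a, b) = Sym2.diag v then 2 else if v ∈ s(a, b) then 1 else 0)
      = (if v = a then 1 else 0) + (if v = b then 1 else 0) := by
  by_cases h1 : v = a <;> by_cases h2 : v = b <;> simp [Sym2.diag, h1, h2, eq_comm] <;> grind

theorem Trail.parity {u v : V} {L : List (Sym2 V)} (h : Trail u L v) (x : V) :
    Even (mDeg (L : Multiset (Sym2 V)) x + (if x = u then 1 else 0) + (if x = v then 1 else 0)) := by
  induction h with
  | nil u => simp [mDeg_zero]
  | cons u y v L _ ih =>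
    rw [← Multiset.cons_coe, mDeg_cons, edge_deg]
    revert ih
    generalize (if x = u then 1 else 0) = p
    generalize (if x = y then 1 else 0) = q
    generalize (if x = v then 1 else 0) = r
    intro ih
    grind

theorem Circ.even {u : V} {S : Multiset (Sym2 V)} (h : Circ u S) (x : V) : Even (mDeg S x) := by
  obtain ⟨L, h, rfl⟩ := h
  have := h.parity x
  grind

theorem trail_of_walk (u : V) (w : List V) :
    Trail u (walkEdgeList (u :: w)) ((u :: w).getLast (by simp)) := by
  induction w generalizing u with
  | nil => exact .nil _
  | cons x w ih =>
    have := ih x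
    rw [List.getLast_cons (by simp)]
    exact .cons _ _ _ _ this

theorem walk_of_trail {u v : V} {L : List (Sym2 V)} (h : Trail u L v) :
    ∃ w, walkEdgeList (u :: w) = L ∧ (u :: w).getLast (by simp) = v := by
  induction h with
  | nil u => exact ⟨[], rfl, rfl⟩
  | cons u x v L _ ih =>
    obtain ⟨w, h1, h2⟩ := ih
    refine ⟨x :: w, ?_, ?_⟩
    · rw [← h1]; rfl
    · rw [List.getLast_cons (by simp)]; exact h2

theorem chain_iff (S : Finset (Sym2 V)) (u : V) (w : List V) :
    (u :: w).IsChain (fun a b => s(a, b) ∈ S) ↔ ∀ e ∈ walkEdgeList (u :: w), e ∈ S := by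
  induction w generalizing u with
  | nil => simp [walkEdgeList]
  | cons x w ih =>
    rw [List.isChain_cons_cons, ih]
    have : walkEdgeList (u :: x :: w) = s(u, x) :: walkEdgeList (x :: w) := rfl
    rw [this]
    simp

theorem tight_iff (φ : CNF3) : (∃ T : List V3, IsTightTour φ T) ↔
    ∃ u L, Trail u L u ∧ (∀ e ∈ L, e ∈ Eall φ) ∧ (∀ e ∈ Eall φ, e ∈ L) ∧ PrecRespecting φ L ∧
      2 * L.length ≤ 2 * (Eall φ).card + imb φ := by
  have key : ∀ a b c : ℕ, ((a : ℚ) ≤ b + (c : ℚ) / 2) ↔ 2 * a ≤ 2 * b + c := by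
    intro a b c
    rw [← @Nat.cast_le ℚ]
    push_cast
    constructor <;> intro h <;> linarith
  constructor
  · rintro ⟨T, ⟨h0, h1, h2, h3, h4⟩, h5⟩
    cases T with
    | nil => simp at h0
    | cons u w =>
      refine ⟨u, walkEdgeList (u :: w), ?_, (chain_iff _ _ _).1 h1, h3, h4, ?_⟩
      · have := trail_of_walk u w
        have h : (u :: w).getLast (by simp) = u := by
          rw [List.getLast?_eq_getLast_of_ne_nil (by simp)] at h2
          simpa using h2.symm
        rwa [h] at this
      · rw [key] at h5
        simpa [walkEdges] using h5
  · rintro ⟨u, L, h, h1, h2, h3, h4⟩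
    obtain ⟨w, rfl, h6⟩ := walk_of_trail h
    refine ⟨u :: w, ⟨by simp, (chain_iff _ _ _).2 h1, ?_, h2, h3⟩, ?_⟩
    · rw [List.getLast?_eq_getLast_of_ne_nil (by simp), h6]; rfl
    · rw [key]; simpa [walkEdges] using h4

/-- The vertex `t_i^l` (for `true`) or `f_i^l` (for `false`). -/
def vv : Bool → ℕ → ℕ → V3
  | true, i, l => V3.t i l
  | false, i, l => V3.f i l

@[simp] theorem vv_inj (s s' : Bool) (i i' l l' : ℕ) :
    vv s i l = vv s' i' l' ↔ s = s' ∧ i = i' ∧ l = l' := by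
  cases s <;> cases s' <;> simp [vv]

@[simp] theorem vv_ne_z (s : Bool) (i i' l l' : ℕ) : vv s i l ≠ V3.z i' l' := by
  cases s <;> simp [vv]
@[simp] theorem vv_ne_a (s : Bool) (i i' l l' : ℕ) : vv s i l ≠ V3.a i' l' := by
  cases s <;> simp [vv]
@[simp] theorem vv_ne_b (s : Bool) (i i' l l' : ℕ) : vv s i l ≠ V3.b i' l' := by
  cases s <;> simp [vv]
@[simp] theorem vv_ne_cs (s : Bool) (i l : ℕ) : vv s i l ≠ V3.cs := by
  cases s <;> simp [vv]
@[simp] theorem vv_ne_c1 (s : Bool) (i l j : ℕ) : vv s i l ≠ V3.c1 j := by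
  cases s <;> simp [vv]
@[simp] theorem vv_ne_c2 (s : Bool) (i l j : ℕ) : vv s i l ≠ V3.c2 j := by
  cases s <;> simp [vv]
@[simp] theorem z_ne_vv (s : Bool) (i i' l l' : ℕ) : V3.z i' l' ≠ vv s i l := by
  cases s <;> simp [vv]
@[simp] theorem a_ne_vv (s : Bool) (i i' l l' : ℕ) : V3.a i' l' ≠ vv s i l := by
  cases s <;> simp [vv]
@[simp] theorem b_ne_vv (s : Bool) (i i' l l' : ℕ) : V3.b i' l' ≠ vv s i l := by
  cases s <;> simp [vv]
@[simp] theorem cs_ne_vv (s : Bool) (i l : ℕ) : V3.cs ≠ vv s i l := by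
  cases s <;> simp [vv]
@[simp] theorem c1_ne_vv (s : Bool) (i l j : ℕ) : V3.c1 j ≠ vv s i l := by
  cases s <;> simp [vv]
@[simp] theorem c2_ne_vv (s : Bool) (i l j : ℕ) : V3.c2 j ≠ vv s i l := by
  cases s <;> simp [vv]

theorem mem_X (φ : CNF3) (i : ℕ) (e : Sym2 V3) : e ∈ Xedges φ i ↔
    (∃ s l, 1 ≤ l ∧ l < 6 * μ φ i ∧ e = s(vv s i l, vv s i (l + 1))) ∨
    e = s(vv true i (6 * μ φ i), vv false i (6 * μ φ i)) ∨ e = s(vv false i 1, vv true i 1) := by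
  simp only [Xedges, Finset.mem_union, Finset.mem_image, Finset.mem_Ico, Finset.mem_insert,
    Finset.mem_singleton, Bool.exists_bool, vv]
  constructor
  · rintro ((⟨l, h, rfl⟩ | ⟨l, h, rfl⟩) | h)
    · exact .inl (.inr ⟨l, h.1, h.2, rfl⟩)
    · exact .inl (.inl ⟨l, h.1, h.2, rfl⟩)
    · exact .inr h
  · rintro ((⟨l, h, h', rfl⟩ | ⟨l, h, h', rfl⟩) | h)
    · exact .inl (.inr ⟨l, ⟨h, h'⟩, rfl⟩)
    · exact .inl (.inl ⟨l, ⟨h, h'⟩, rfl⟩)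
    · exact .inr h

theorem mem_Y (φ : CNF3) (i : ℕ) (e : Sym2 V3) : e ∈ Yedges φ i ↔
    ∃ s s', e = s(vv s i (6 * μ φ i), vv s' ((i + 1) % φ.n) 1) := by
  simp only [Yedges, Finset.mem_insert, Finset.mem_singleton, Bool.exists_bool, vv]
  rw [Sym2.eq_swap (a := V3.f ((i + 1) % φ.n) 1), Sym2.eq_swap (a := V3.t ((i + 1) % φ.n) 1)]
  tauto

/-- The edges of the cycle `Z_{ij}` or `Z̄_{ij}`. -/
def zc (φ : CNF3) (s : Bool) (i j : ℕ) : Finset (Sym2 V3) :=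
  {s(vv s i (6 * posOf φ i j - 3), V3.c1 j),
   s(V3.c1 j, V3.a i j),
   s(V3.a i j, V3.c2 j),
   s(V3.c2 j, vv s i (6 * posOf φ i j - 2)),
   s(vv s i (6 * posOf φ i j - 2), V3.b i j),
   s(V3.b i j, vv s i (6 * posOf φ i j - 3))}

theorem mem_zc (φ : CNF3) (s : Bool) (i j : ℕ) (e : Sym2 V3) : e ∈ zc φ s i j ↔
   e = s(vv s i (6 * posOf φ i j - 3), V3.c1 j) ∨
   e = s(V3.c1 j, V3.a i j) ∨
   e = s(V3.a i j, V3.c2 j) ∨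
   e = s(V3.c2 j, vv s i (6 * posOf φ i j - 2)) ∨
   e = s(vv s i (6 * posOf φ i j - 2), V3.b i j) ∨
   e = s(V3.b i j, vv s i (6 * posOf φ i j - 3)) := by
  simp [zc]

theorem mem_E0 (φ : CNF3) (e : Sym2 V3) : e ∈ E0 φ ↔
    (∃ i < φ.n, e ∈ Xedges φ i) ∨ (∃ i < φ.n, e ∈ Yedges φ i) ∨
    (∃ j < φ.m, ∃ i s, (i, s) ∈ φ.clause j ∧ e ∈ zc φ s i j) := by
  have : ∀ (p : ℕ × Bool) j, (if p.2 then Zedges φ p.1 j else Zbedges φ p.1 j) = zc φ p.2 p.1 j := by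
    rintro ⟨i, s⟩ j
    cases s <;> rfl
  simp only [E0, this, Finset.mem_union, Finset.mem_biUnion, Finset.mem_range, Prod.exists, or_assoc]

theorem mem_star (φ : CNF3) (e : Sym2 V3) : e ∈ Estar φ ↔
    ∃ j < φ.m, e = s(V3.c1 j, V3.cs) ∨ e = s(V3.cs, V3.c2 j) := by
  simp [Estar]

theorem mem_pl (φ : CNF3) (i l : ℕ) (e : Sym2 V3) : e ∈ Epl φ i l ↔
    ∃ s, e = s(vv s i l, V3.z i l) := by
  simp only [Epl, Finset.mem_insert, Finset.mem_singleton, Bool.exists_bool, vv]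
  rw [Sym2.eq_swap (a := V3.z i l)]
  tauto

theorem mem_all (φ : CNF3) (e : Sym2 V3) : e ∈ Eall φ ↔
    e ∈ E0 φ ∨ e ∈ Estar φ ∨ ∃ i < φ.n, ∃ l, 1 ≤ l ∧ l ≤ 6 * μ φ i ∧ e ∈ Epl φ i l := by
  simp only [Eall, Finset.mem_union, Finset.mem_biUnion, Finset.mem_range, Finset.mem_Icc]
  grind

theorem mem_occ {φ : CNF3} {i j : ℕ} {s : Bool} (hj : j < φ.m) (h : (i, s) ∈ φ.clause j) :
    j ∈ occ φ i := by
  cases s <;> simp [occ, hj, h]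

theorem posOf_pos {φ : CNF3} {i j : ℕ} (h : j ∈ occ φ i) : 1 ≤ posOf φ i j := by
  apply Finset.card_pos.2
  exact ⟨j, by simp [h]⟩

theorem posOf_le {φ : CNF3} {i j : ℕ} : posOf φ i j ≤ μ φ i :=
  Finset.card_le_card (Finset.filter_subset _ _)

theorem posOf_lt {φ : CNF3} {i j j' : ℕ} (h' : j' ∈ occ φ i) (hl : j < j') :
    posOf φ i j < posOf φ i j' := by
  apply Finset.card_lt_card
  rw [Finset.ssubset_iff_of_subset]
  · exact ⟨j', by simp [h'], by simp [hl]⟩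
  · intro x hx
    simp only [Finset.mem_filter] at hx ⊢
    exact ⟨hx.1, by omega⟩

theorem posOf_inj {φ : CNF3} {i j j' : ℕ} (h : j ∈ occ φ i) (h' : j' ∈ occ φ i)
    (hp : posOf φ i j = posOf φ i j') : j = j' := by
  rcases lt_trichotomy j j' with hl | hl | hl
  · have := posOf_lt h' hl; omega
  · exact hl
  · have := posOf_lt h hl; omega

theorem taut_eq {φ : CNF3} {i j : ℕ} {s s' : Bool} (hj : j < φ.m) (h : (i, s) ∈ φ.clause j)
    (h' : (i, s') ∈ φ.clause j) : s = s' := by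
  have := φ.no_taut j hj i
  cases s <;> cases s' <;> simp_all

/-! ### Disjointness -/

theorem disj_XX (φ : CNF3) {i i' : ℕ} (h : i ≠ i') : Disjoint (Xedges φ i) (Xedges φ i') := by
  rw [Finset.disjoint_left]
  intro e h1 h2
  rw [mem_X] at h1 h2
  rcases h1 with ⟨s, l, _, _, rfl⟩ | rfl | rfl <;>
  rcases h2 with ⟨s', l', _, _, h2⟩ | h2 | h2 <;>
  simp only [Sym2.eq_iff, vv_inj] at h2 <;> omega

theorem disj_XY (φ : CNF3) (i i' : ℕ) (hi : 1 ≤ μ φ i) :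
    Disjoint (Xedges φ i) (Yedges φ i') := by
  rw [Finset.disjoint_left]
  intro e h1 h2
  rw [mem_X] at h1
  rw [mem_Y] at h2
  obtain ⟨a, b, rfl⟩ := h2
  rcases h1 with ⟨s, l, _, _, h2⟩ | h2 | h2 <;>
  simp only [Sym2.eq_iff, vv_inj] at h2 <;> rcases h2 with ⟨⟨_, rfl, _⟩, _⟩ | ⟨⟨_, _, _⟩, _, rfl, _⟩ <;> omega

theorem disj_YY (φ : CNF3) {i i' : ℕ} (h : i ≠ i') :
    Disjoint (Yedges φ i) (Yedges φ i') := by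
  rw [Finset.disjoint_left]
  intro e h1 h2
  rw [mem_Y] at h1 h2
  obtain ⟨a, b, rfl⟩ := h1
  obtain ⟨a', b', h2⟩ := h2
  simp only [Sym2.eq_iff, vv_inj] at h2; omega

theorem disj_XZ (φ : CNF3) (i i' j : ℕ) (s : Bool) : Disjoint (Xedges φ i) (zc φ s i' j) := by
  rw [Finset.disjoint_left]
  intro e h1 h2
  rw [mem_X] at h1
  rw [mem_zc] at h2
  rcases h1 with ⟨s, l, _, _, rfl⟩ | rfl | rfl <;> simp at h2

theorem disj_YZ (φ : CNF3) (i i' j : ℕ) (s : Bool) : Disjoint (Yedges φ i) (zc φ s i' j) := by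
  rw [Finset.disjoint_left]
  intro e h1 h2
  rw [mem_Y] at h1
  rw [mem_zc] at h2
  obtain ⟨a, b, rfl⟩ := h1
  simp at h2

theorem disj_ZZ (φ : CNF3) {i i' j j' : ℕ} {s s' : Bool} (hj : j < φ.m)
    (h1 : (i, s) ∈ φ.clause j) (h2 : (i', s') ∈ φ.clause j') (h : (j, i, s) ≠ (j', i', s')) :
    Disjoint (zc φ s i j) (zc φ s' i' j') := by
  have h' : ¬ (i = i' ∧ j = j') := by
    rintro ⟨rfl, rfl⟩
    exact h (by rw [taut_eq hj h1 h2])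
  rw [Finset.disjoint_left]
  intro e h1 h2
  rw [mem_zc] at h1 h2
  rcases h1 with rfl | rfl | rfl | rfl | rfl | rfl <;> simp at h2 <;> grind

/-! ### The cycles are closed walks -/

theorem circ_of_list {u : V} {L : List (Sym2 V)} {S : Finset (Sym2 V)} (h : Trail u L u)
    (hn : L.length ≤ S.card) (hm : ∀ e ∈ S, e ∈ L) : Circ u S.val := by
  refine ⟨L, h, ?_⟩
  symm
  apply Multiset.eq_of_le_of_card_le
  · rw [Multiset.le_iff_subset S.nodup]
    intro e he
    exact hm e he
  · simpa using hn

theorem circ_Z (φ : CNF3) {i j : ℕ} {s : Bool} (hj : j < φ.m)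
    (h : (i, s) ∈ φ.clause j) : Circ (vv s i (6 * posOf φ i j - 3)) (zc φ s i j).val := by
  have hp := posOf_pos (mem_occ hj h)
  have hne : 6 * posOf φ i j - 3 ≠ 6 * posOf φ i j - 2 := by omega
  refine circ_of_list (L := [_, _, _, _, _, _]) (.cons _ (V3.c1 j) _ _ (.cons _ (V3.a i j) _ _
    (.cons _ (V3.c2 j) _ _ (.cons _ (vv s i (6 * posOf φ i j - 2)) _ _
    (.cons _ (V3.b i j) _ _ (.cons _ _ _ _ (.nil _))))))) ?_ ?_
  · rw [zc]
    rw [Finset.card_insert_of_notMem, Finset.card_insert_of_notMem, Finset.card_insert_of_notMem,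
      Finset.card_insert_of_notMem, Finset.card_insert_of_notMem]
    all_goals simp
    exact hne.symm
  · intro e he
    simpa [mem_zc] using he

theorem circ_Y (φ : CNF3) {i : ℕ} (hi : 1 ≤ μ φ i) :
    Circ (vv true i (6 * μ φ i)) (Yedges φ i).val := by
  have hne : 1 ≠ 6 * μ φ i := by omega
  refine circ_of_list (L := [_, _, _, _]) (.cons _ (V3.f ((i + 1) % φ.n) 1) _ _
    (.cons _ (V3.f i (6 * μ φ i)) _ _ (.cons _ (V3.t ((i + 1) % φ.n) 1) _ _
    (.cons _ _ _ _ (.nil _))))) ?_ ?_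
  · rw [Yedges]
    rw [Finset.card_insert_of_notMem, Finset.card_insert_of_notMem, Finset.card_insert_of_notMem]
    all_goals simp
    all_goals grind
  · intro e he
    simpa [Yedges, vv] using he

theorem trail_side (s : Bool) (i k : ℕ) :
    Trail (vv s i 1) ((List.range k).map fun l => s(vv s i (l + 1), vv s i (l + 1 + 1)))
      (vv s i (k + 1)) := by
  induction k with
  | zero => exact .nil _
  | succ k ih =>
    rw [List.range_succ, List.map_append]
    exact ih.append (.single _ _)

theorem circ_X (φ : CNF3) {i : ℕ} (hi : 1 ≤ μ φ i) :
    Circ (vv true i 1) (Xedges φ i).val := by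
  obtain ⟨k, hk⟩ : ∃ k, 6 * μ φ i = k + 1 := ⟨6 * μ φ i - 1, by omega⟩
  have h1 := trail_side true i k
  have h2 := (trail_side false i k).reverse
  have h := (h1.append (.single _ (vv false i (k+1)))).append
    (h2.append (.single _ (vv true i 1)))
  refine circ_of_list h ?_ ?_
  · rw [Xedges, hk]
    rw [Finset.card_union_of_disjoint, Finset.card_union_of_disjoint, Finset.card_image_of_injective,
      Finset.card_image_of_injective, Finset.card_pair]
    · simp; omega
    · simp; omega
    · intro a b; simp; omega
    · intro a b; simp; omega
    · rw [Finset.disjoint_left]; intro e; simp only [Finset.mem_image]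
      rintro ⟨a, _, rfl⟩ ⟨b, _, h⟩; simp at h
    · rw [Finset.disjoint_left]; intro e; simp only [Finset.mem_image, Finset.mem_union]
      rintro (⟨a, _, rfl⟩ | ⟨a, _, rfl⟩) h <;> simp at h
  · intro e he
    rw [mem_X, hk] at he
    simp only [List.mem_append, List.mem_map, List.mem_range, List.mem_reverse, List.mem_singleton]
    rcases he with ⟨s, l, h1, h2, rfl⟩ | rfl | rfl
    · obtain ⟨l, rfl⟩ : ∃ l', l = l' + 1 := ⟨l - 1, by omega⟩
      cases s
      · exact .inr (.inl ⟨l, by omega, rfl⟩)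
      · exact .inl (.inl ⟨l, by omega, rfl⟩)
    · simp
    · simp

/-! ### `E_0` is Eulerian -/

theorem circ_XY (φ : CNF3) (hμ : ∀ i < φ.n, 1 ≤ μ φ i) (k : ℕ) (hk : k < φ.n) :
    Circ (vv true 0 1)
      ((Finset.range (k + 1)).biUnion fun i => Xedges φ i ∪ Yedges φ i).val := by
  have base : ∀ i < φ.n, Circ (vv true i 1) (Xedges φ i ∪ Yedges φ i).val := by
    intro i hi
    refine (circ_X φ (hμ i hi)).union (v := vv true i (6 * μ φ i)) ?_ (circ_Y φ (hμ i hi))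
      (disj_XY φ i i (hμ i hi))
    refine ⟨s(vv true i (6 * μ φ i), vv false i (6 * μ φ i)), ?_, by simp⟩
    rw [mem_X]; simp
  induction k with
  | zero => simpa using base 0 hk
  | succ k ih =>
    rw [Finset.range_add_one, Finset.biUnion_insert, Finset.union_comm]
    refine (ih (by omega)).union (v := vv true (k + 1) 1) ?_ (base _ hk) ?_
    · refine ⟨s(vv true k (6 * μ φ k), vv true (k + 1) 1), ?_, by simp⟩
      simp only [Finset.mem_biUnion, Finset.mem_range, Finset.mem_union]
      refine ⟨k, by omega, .inr ?_⟩
      rw [mem_Y]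
      exact ⟨true, true, by rw [Nat.mod_eq_of_lt hk]⟩
    · rw [Finset.disjoint_biUnion_left]
      intro i hi
      have hi : i < k + 1 := by simpa using hi
      rw [Finset.disjoint_union_left, Finset.disjoint_union_right, Finset.disjoint_union_right]
      refine ⟨⟨disj_XX φ (by omega), disj_XY φ _ _ (hμ _ (by omega))⟩,
        ⟨(disj_XY φ _ _ (hμ _ (by omega))).symm, disj_YY φ (by omega)⟩⟩

theorem circ_E0 (φ : CNF3) (hμ : ∀ i < φ.n, 1 ≤ μ φ i) (hn : 0 < φ.n) :
    Circ (vv true 0 1) (E0 φ).val := by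
  have h1 := circ_XY φ hμ (φ.n - 1) (by omega)
  rw [Nat.sub_add_cancel hn] at h1
  set S := (Finset.range φ.n).biUnion fun i => Xedges φ i ∪ Yedges φ i with hS
  have key : ∀ F : Finset (ℕ × ℕ × Bool), (∀ p ∈ F, p.1 < φ.m ∧ p.2 ∈ φ.clause p.1) →
      Circ (vv true 0 1) (S ∪ F.biUnion fun p => zc φ p.2.2 p.2.1 p.1).val := by
    intro F
    induction F using Finset.induction_on with
    | empty => intro _; simpa using h1
    | insert p F hp ih =>
      intro hF
      obtain ⟨j, i, s⟩ := p
      have h2 := ih (fun p hp => hF p (Finset.mem_insert_of_mem hp))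
      obtain ⟨hj, hc⟩ := hF _ (Finset.mem_insert_self _ _)
      simp only at hj hc
      have hi := φ.var_lt j hj _ hc
      simp only at hi
      rw [Finset.biUnion_insert, Finset.union_comm (zc φ _ _ _), ← Finset.union_assoc]
      refine h2.union ?_ (circ_Z φ hj hc) ?_
      · have hp := posOf_pos (mem_occ hj hc)
        have hp' := posOf_le (φ := φ) (i := i) (j := j)
        refine ⟨s(vv s i (6 * posOf φ i j - 3), vv s i (6 * posOf φ i j - 3 + 1)), ?_, by simp⟩
        apply Finset.mem_union_left
        rw [hS]
        simp only [Finset.mem_biUnion, Finset.mem_range, Finset.mem_union]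
        refine ⟨i, hi, .inl ?_⟩
        rw [mem_X]
        exact .inl ⟨s, _, by omega, by omega, rfl⟩
      · rw [Finset.disjoint_union_left]
        constructor
        · rw [hS, Finset.disjoint_biUnion_left]
          intro k _
          rw [Finset.disjoint_union_left]
          exact ⟨disj_XZ _ _ _ _ _, disj_YZ _ _ _ _ _⟩
        · rw [Finset.disjoint_biUnion_left]
          rintro ⟨j', i', s'⟩ hq
          obtain ⟨hj', hc'⟩ := hF _ (Finset.mem_insert_of_mem hq)
          refine disj_ZZ φ hj' hc' hc ?_
          intro h
          rw [h] at hq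
          exact hp hq
  have h3 := key ((Finset.range φ.m).biUnion fun j => (φ.clause j).image fun p => (j, p)) (by
    intro p hp
    simp only [Finset.mem_biUnion, Finset.mem_range, Finset.mem_image] at hp
    obtain ⟨j, hj, q, hq, rfl⟩ := hp
    exact ⟨hj, hq⟩)
  convert h3 using 2
  ext e
  rw [mem_E0, hS]
  simp only [Finset.mem_biUnion, Finset.mem_range, Finset.mem_image, Finset.mem_union]
  constructor
  · rintro (⟨i, hi, h⟩ | ⟨i, hi, h⟩ | ⟨j, hj, i, s, h, h'⟩)
    · exact .inl ⟨i, hi, .inl h⟩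
    · exact .inl ⟨i, hi, .inr h⟩
    · exact .inr ⟨(j, i, s), ⟨j, hj, (i, s), h, rfl⟩, h'⟩
  · rintro (⟨i, hi, h | h⟩ | ⟨p, ⟨j, hj, q, h, rfl⟩, h'⟩)
    · exact .inl ⟨i, hi, h⟩
    · exact .inr (.inl ⟨i, hi, h⟩)
    · exact .inr (.inr ⟨j, hj, q.1, q.2, h, h'⟩)

theorem E0_empty (φ : CNF3) (hn : φ.n = 0) : E0 φ = ∅ := by
  ext e
  rw [mem_E0]
  simp only [Finset.notMem_empty, iff_false]
  rintro (⟨i, hi, h⟩ | ⟨i, hi, h⟩ | ⟨j, hj, i, s, h, h'⟩)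
  · omega
  · omega
  · have := φ.var_lt j hj _ h
    simp only at this
    omega

theorem E0_even (φ : CNF3) (hμ : ∀ i < φ.n, 1 ≤ μ φ i) (v : V3) : Even (mDeg (E0 φ).val v) := by
  rcases Nat.eq_zero_or_pos φ.n with h | h
  · rw [E0_empty φ h]; simp [mDeg]
  · exact (circ_E0 φ hμ h).even v

/-! ### Parities of the degrees -/

theorem val_biUnion {ι : Type} [DecidableEq ι] (F : Finset ι) (g : ι → Finset (Sym2 V))
    (h : ∀ i ∈ F, ∀ k ∈ F, i ≠ k → Disjoint (g i) (g k)) (v : V) :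
    mDeg (F.biUnion g).val v = ∑ i ∈ F, mDeg (g i).val v := by
  induction F using Finset.induction_on with
  | empty => simp [mDeg]
  | insert p F hp ih =>
    rw [Finset.biUnion_insert, Finset.sum_insert hp, ← ih]
    · rw [← Finset.disjUnion_eq_union, Finset.disjUnion_val, mDeg_add]
      rw [Finset.disjoint_biUnion_right]
      intro i hi
      exact h _ (Finset.mem_insert_self _ _) _ (Finset.mem_insert_of_mem hi) (by grind)
    · intro i hi k hk
      exact h i (Finset.mem_insert_of_mem hi) k (Finset.mem_insert_of_mem hk)

theorem mDeg_pair (a b c d v : V) (h : s(a, b) ≠ s(c, d)) :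
    mDeg ({s(a, b), s(c, d)} : Finset (Sym2 V)).val v =
      (if v = a then 1 else 0) + (if v = b then 1 else 0) +
      ((if v = c then 1 else 0) + (if v = d then 1 else 0)) := by
  have : ({s(a, b), s(c, d)} : Finset (Sym2 V)).val = s(a, b) ::ₘ s(c, d) ::ₘ 0 := by
    rw [Finset.insert_val_of_notMem (by simpa using h)]; rfl
  rw [this, mDeg_cons, mDeg_cons, mDeg_zero, edge_deg, edge_deg]
  rfl

theorem star_deg (φ : CNF3) (v : V3) : mDeg (Estar φ).val v =
    ∑ j ∈ Finset.range φ.m, ((if v = V3.c1 j then 1 else 0) + (if v = V3.cs then 1 else 0) +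
      ((if v = V3.cs then 1 else 0) + (if v = V3.c2 j then 1 else 0))) := by
  rw [Estar, val_biUnion]
  · apply Finset.sum_congr rfl
    intro j _
    rw [mDeg_pair _ _ _ _ _ (by simp)]
  · intro i _ k _ h
    rw [Finset.disjoint_left]
    intro e h1 h2
    simp only [Finset.mem_insert, Finset.mem_singleton] at h1 h2
    rcases h1 with rfl | rfl <;> simp at h2 <;> omega

/-- All edges of the paths `P_i^l`. -/
def Epaths (φ : CNF3) : Finset (Sym2 V3) :=
  (Finset.range φ.n).biUnion fun i => (Finset.Icc 1 (6 * μ φ i)).biUnion fun l => Epl φ i l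

theorem mem_paths (φ : CNF3) (e : Sym2 V3) : e ∈ Epaths φ ↔
    ∃ i < φ.n, ∃ l, 1 ≤ l ∧ l ≤ 6 * μ φ i ∧ ∃ s, e = s(vv s i l, V3.z i l) := by
  simp only [Epaths, Finset.mem_biUnion, Finset.mem_range, Finset.mem_Icc, mem_pl, and_assoc]

theorem paths_deg (φ : CNF3) (v : V3) : mDeg (Epaths φ).val v =
    ∑ i ∈ Finset.range φ.n, ∑ l ∈ Finset.Icc 1 (6 * μ φ i),
      ((if v = V3.t i l then 1 else 0) + (if v = V3.z i l then 1 else 0) +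
      ((if v = V3.z i l then 1 else 0) + (if v = V3.f i l then 1 else 0))) := by
  rw [Epaths, val_biUnion]
  · apply Finset.sum_congr rfl
    intro i _
    rw [val_biUnion]
    · apply Finset.sum_congr rfl
      intro l _
      rw [Epl, mDeg_pair _ _ _ _ _ (by simp)]
    · intro l _ k _ h
      rw [Finset.disjoint_left]
      intro e h1 h2
      rw [mem_pl] at h1 h2
      obtain ⟨s, rfl⟩ := h1
      obtain ⟨s', h2⟩ := h2
      simp at h2; omega
  · intro i _ k _ h
    rw [Finset.disjoint_left]
    intro e h1 h2
    simp only [Finset.mem_biUnion, mem_pl] at h1 h2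
    obtain ⟨l, _, s, rfl⟩ := h1
    obtain ⟨l', _, s', h2⟩ := h2
    simp at h2; omega

theorem E0_no_cs_z (φ : CNF3) (e : Sym2 V3) (h : e ∈ E0 φ) : V3.cs ∉ e ∧ ∀ i l, V3.z i l ∉ e := by
  rw [mem_E0] at h
  rcases h with ⟨i, hi, h⟩ | ⟨i, hi, h⟩ | ⟨j, hj, i, s, h, h'⟩
  · rw [mem_X] at h
    rcases h with ⟨s, l, _, _, rfl⟩ | rfl | rfl <;> simp
  · rw [mem_Y] at h
    rcases h with ⟨s, l, rfl⟩; simp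
  · rw [mem_zc] at h'
    rcases h' with rfl | rfl | rfl | rfl | rfl | rfl <;> simp

theorem disj_E0_star (φ : CNF3) : Disjoint (E0 φ) (Estar φ) := by
  rw [Finset.disjoint_left]
  intro e h1 h2
  have := (E0_no_cs_z φ e h1).1
  rw [mem_star] at h2
  obtain ⟨j, _, rfl | rfl⟩ := h2 <;> simp at this

theorem disj_paths (φ : CNF3) : Disjoint (E0 φ ∪ Estar φ) (Epaths φ) := by
  rw [Finset.disjoint_left]
  intro e h1 h2
  rw [mem_paths] at h2
  obtain ⟨i, _, l, _, _, s, rfl⟩ := h2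
  rw [Finset.mem_union] at h1
  rcases h1 with h1 | h1
  · have := (E0_no_cs_z φ _ h1).2 i l
    simp at this
  · rw [mem_star] at h1
    obtain ⟨j, _, h | h⟩ := h1 <;> simp at h

theorem all_val (φ : CNF3) : (Eall φ).val = (E0 φ).val + (Estar φ).val + (Epaths φ).val := by
  have : Eall φ = E0 φ ∪ Estar φ ∪ Epaths φ := rfl
  rw [this, ← Finset.disjUnion_eq_union _ _ (disj_paths φ), Finset.disjUnion_val,
    ← Finset.disjUnion_eq_union _ _ (disj_E0_star φ), Finset.disjUnion_val]

theorem all_card (φ : CNF3) : (Eall φ).card = (E0 φ).card + 2 * φ.m +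
    2 * ∑ i ∈ Finset.range φ.n, 6 * μ φ i := by
  have h : (Eall φ).card = (E0 φ).card + (Estar φ).card + (Epaths φ).card := by
    have := congrArg Multiset.card (all_val φ)
    simpa using this
  have h1 : (Estar φ).card = 2 * φ.m := by
    rw [Estar, Finset.card_biUnion]
    · simp [Finset.card_pair, mul_comm]
    · intro i _ k _ h
      rw [Function.onFun, Finset.disjoint_left]
      intro e h1 h2
      simp only [Finset.mem_insert, Finset.mem_singleton] at h1 h2
      rcases h1 with rfl | rfl <;> simp at h2 <;> omega
  have h2 : (Epaths φ).card = 2 * ∑ i ∈ Finset.range φ.n, 6 * μ φ i := by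
    rw [Epaths, Finset.card_biUnion, Finset.mul_sum]
    · apply Finset.sum_congr rfl
      intro i _
      rw [Finset.card_biUnion]
      · simp [Epl, Finset.card_pair, mul_comm]
      · intro l _ k _ h
        rw [Function.onFun, Finset.disjoint_left]
        intro e h1 h2
        rw [mem_pl] at h1 h2
        obtain ⟨s, rfl⟩ := h1
        obtain ⟨s', h2⟩ := h2
        simp at h2; omega
    · intro i _ k _ h
      rw [Function.onFun, Finset.disjoint_left]
      intro e h1 h2
      simp only [Finset.mem_biUnion, mem_pl] at h1 h2
      obtain ⟨l, _, s, rfl⟩ := h1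
      obtain ⟨l', _, s', h2⟩ := h2
      simp at h2; omega
  rw [h, h1, h2]

/-- The set of vertices `t_i^l, f_i^l, c_j^1, c_j^2`. -/
def Uset (φ : CNF3) : Finset V3 :=
  ((Finset.range φ.n).biUnion fun i => (Finset.Icc 1 (6 * μ φ i)).biUnion fun l =>
    {V3.t i l, V3.f i l}) ∪ (Finset.range φ.m).biUnion fun j => {V3.c1 j, V3.c2 j}

theorem mem_U (φ : CNF3) (v : V3) : v ∈ Uset φ ↔
    (∃ i < φ.n, ∃ l, 1 ≤ l ∧ l ≤ 6 * μ φ i ∧ ∃ s, v = vv s i l) ∨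
    ∃ j < φ.m, v = V3.c1 j ∨ v = V3.c2 j := by
  simp only [Uset, Finset.mem_union, Finset.mem_biUnion, Finset.mem_range, Finset.mem_Icc,
    Finset.mem_insert, Finset.mem_singleton, Bool.exists_bool, vv, and_assoc,
    or_comm (a := v = V3.t _ _)]

theorem odd_iff (φ : CNF3) (hμ : ∀ i < φ.n, 1 ≤ μ φ i) (v : V3) :
    ¬ Even (mDeg (Eall φ).val v) ↔ v ∈ Uset φ := by
  have h0 := E0_even φ hμ v
  rw [all_val, mDeg_add, mDeg_add, add_assoc]
  have : ¬ Even (mDeg (E0 φ).val v + (mDeg (Estar φ).val v + mDeg (Epaths φ).val v)) ↔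
      ¬ Even (mDeg (Estar φ).val v + mDeg (Epaths φ).val v) := by
    rw [Nat.even_add]; tauto
  rw [this, star_deg, paths_deg]
  have hsum : ∀ i' l' : ℕ, (∑ i ∈ Finset.range φ.n, ∑ l ∈ Finset.Icc 1 (6 * μ φ i),
      if i' = i ∧ l' = l then 1 else 0) =
      if i' < φ.n ∧ 1 ≤ l' ∧ l' ≤ 6 * μ φ i' then 1 else 0 := by
    intro i' l'
    simp_rw [_root_.ite_and]
    simp only [Finset.sum_ite_irrel, Finset.sum_ite_eq, Finset.sum_const_zero, Finset.mem_range,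
      Finset.mem_Icc]
    split_ifs <;> first | rfl | omega
  cases v with
  | t i l =>
    simp [mem_U, vv, hsum, Bool.exists_bool, -Finset.sum_boole]
    split_ifs <;> simp_all
  | f i l =>
    simp [mem_U, vv, hsum, Bool.exists_bool, -Finset.sum_boole]
    split_ifs <;> simp_all
  | z i l =>
    simp [mem_U, vv, Finset.sum_add_distrib]
  | cs => simp [mem_U, vv, Finset.sum_add_distrib]
  | c1 j => simp [mem_U, vv]; split_ifs <;> simp_all
  | c2 j => simp [mem_U, vv]; split_ifs <;> simp_all
  | a i j => simp [mem_U, vv]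
  | b i j => simp [mem_U, vv]

theorem imb_eq (φ : CNF3) (hμ : ∀ i < φ.n, 1 ≤ μ φ i) : imb φ = (Uset φ).card := by
  rw [imb]
  have : ∀ v, (¬ Even (mDeg (Eall φ).val v)) ↔ v ∈ Uset φ := odd_iff φ hμ
  rw [Nat.card_congr (Equiv.subtypeEquivRight this)]
  simp

theorem U_card (φ : CNF3) : (Uset φ).card = 2 * φ.m + 2 * ∑ i ∈ Finset.range φ.n, 6 * μ φ i := by
  rw [Uset, Finset.card_union_of_disjoint, Finset.card_biUnion, Finset.card_biUnion, Finset.mul_sum,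
    add_comm]
  · congr 1
    · simp [Finset.card_pair, mul_comm]
    · apply Finset.sum_congr rfl
      intro i _
      rw [Finset.card_biUnion]
      · simp [Finset.card_pair, mul_comm]
      · intro l _ k _ h
        simp [h.symm]
  · intro l _ k _ h
    simp [h.symm]
  · intro l _ k _ h
    rw [Function.onFun, Finset.disjoint_left]
    intro e h1 h2
    simp only [Finset.mem_biUnion, Finset.mem_insert, Finset.mem_singleton] at h1 h2
    grind
  · rw [Finset.disjoint_left]
    intro e h1 h2
    simp only [Finset.mem_biUnion, Finset.mem_insert, Finset.mem_singleton] at h1 h2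
    grind

/-! ### From a satisfying assignment to a tight tour -/

/-- Relative version of `PrecRespecting`: the edges satisfying `D` have already been traversed. -/
def PR (φ : CNF3) (D : Sym2 V3 → Prop) (L : List (Sym2 V3)) : Prop :=
  ∀ (A : List (Sym2 V3)) (e : Sym2 V3) (B : List (Sym2 V3)), L = A ++ e :: B →
    ∀ C : CI, validCI φ C → e ∈ classEdges φ C →
    ∀ C' : CI, validCI φ C' → prec C' C → ∀ e' ∈ classEdges φ C', D e' ∨ e' ∈ A

theorem PR.prec {φ : CNF3} {L : List (Sym2 V3)} (h : PR φ (fun _ => False) L) :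
    PrecRespecting φ L := by
  intro q hq C hC heC C' hC' hp e he
  have := h (L.take q) L[q] (L.drop (q + 1)) (by simp) C hC heC C' hC' hp e he
  rcases this with h | h
  · exact h.elim
  · obtain ⟨p, hp, h⟩ := List.getElem_of_mem h
    rw [List.length_take] at hp
    refine ⟨p, by omega, by omega, ?_⟩
    rw [← h, List.getElem_take]
    rfl

theorem PrecRespecting.out {φ : CNF3} {L : List (Sym2 V3)} (h : PrecRespecting φ L) :
    PR φ (fun _ => False) L := by
  intro A e B hL C hC heC C' hC' hp e' he'
  subst hL
  obtain ⟨p, hp, hlt, h⟩ := h A.length (by simp) C hC (by simpa using heC) C' hC' hp e' he'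
  right
  rw [← h]
  simp only [List.get_eq_getElem]
  rw [List.getElem_append_left hlt]
  exact List.getElem_mem _

theorem PR.append {φ : CNF3} {D : Sym2 V3 → Prop} {L L' : List (Sym2 V3)} (h : PR φ D L)
    (h' : PR φ (fun e => D e ∨ e ∈ L) L') : PR φ D (L ++ L') := by
  intro A e B hL C hC heC C' hC' hp e' he'
  rw [List.append_eq_append_iff] at hL
  rcases hL with ⟨K, rfl, hK⟩ | ⟨K, rfl, hK⟩
  · have := h' K e B hK C hC heC C' hC' hp e' he'
    rw [List.mem_append]
    tauto
  · cases K with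
    | nil =>
      have := h' [] e B (by simpa using hK.symm) C hC heC C' hC' hp e' he'
      simpa using this
    | cons x K =>
      simp only [List.cons_append, List.cons.injEq] at hK
      obtain ⟨rfl, rfl⟩ := hK
      exact h A e K rfl C hC heC C' hC' hp e' he'

theorem PR.of_class {φ : CNF3} {D : Sym2 V3 → Prop} {L : List (Sym2 V3)} (i l : ℕ)
    (h : ∀ e ∈ L, ∀ i' l', e ∈ Epl φ i' l' → i' = i ∧ l' = l)
    (h0 : ∀ e ∈ E0 φ, D e)
    (h1 : ∀ i' l', validCI φ (.pl i' l') → (i' < i ∨ (i' = i ∧ l' < l)) → ∀ e ∈ Epl φ i' l', D e) :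
    PR φ D L := by
  intro A e B hL C hC heC C' hC' hp e' he'
  left
  have he : e ∈ L := by simp [hL]
  cases C with
  | e0 => cases C' <;> simp [HCPPFormal.prec] at hp
  | star => cases C' <;> simp [HCPPFormal.prec] at hp
  | pl a b =>
    obtain ⟨rfl, rfl⟩ := h e he a b heC
    cases C' with
    | e0 => exact h0 _ he'
    | star => simp [HCPPFormal.prec] at hp
    | pl c d => exact h1 c d hC' hp _ he'

theorem nonpl {φ : CNF3} {e : Sym2 V3} (h : e ∈ E0 φ ∨ e ∈ Estar φ) (i l : ℕ) :
    e ∉ Epl φ i l := by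
  rw [mem_pl]
  rintro ⟨s, rfl⟩
  rcases h with h | h
  · have := (E0_no_cs_z φ _ h).2 i l
    simp at this
  · rw [mem_star] at h
    obtain ⟨j, _, h | h⟩ := h <;> simp at h

/-- The side at which the tour leaves `P_i^l`. -/
def exS (σ : ℕ → Bool) (i l : ℕ) : Bool := σ i == decide (l % 2 = 1)

/-- The index pair following `(i, l)`. -/
def nxt (φ : CNF3) (i l : ℕ) : ℕ × ℕ := if l < 6 * μ φ i then (i, l + 1) else ((i + 1) % φ.n, 1)

open Classical in
theorem exists_link (φ : CNF3) (σ : ℕ → Bool) (lit : ℕ → ℕ × Bool)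
    (hlit : ∀ j < φ.m, lit j ∈ φ.clause j ∧ σ (lit j).1 = (lit j).2) (i l : ℕ)
    (hi : i < φ.n) (hl : 1 ≤ l) (hl' : l ≤ 6 * μ φ i) :
    ∃ D : List (Sym2 V3),
      Trail (vv (exS σ i l) i l) D
        (vv (!exS σ (nxt φ i l).1 (nxt φ i l).2) (nxt φ i l).1 (nxt φ i l).2) ∧
      (∀ e ∈ D, e ∈ E0 φ ∨ e ∈ Estar φ) ∧
      (D.length = 1 + 3 * if ∃ j < φ.m, (lit j).1 = i ∧ l = 6 * posOf φ i j - 3 then 1 else 0) ∧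
      (∀ j < φ.m, (lit j).1 = i → l = 6 * posOf φ i j - 3 →
        s(V3.c1 j, V3.cs) ∈ D ∧ s(V3.cs, V3.c2 j) ∈ D) := by
  by_cases h : ∃ j < φ.m, (lit j).1 = i ∧ l = 6 * posOf φ i j - 3
  · rw [if_pos h]
    obtain ⟨j, hj, h1, h2⟩ := h
    obtain ⟨hc, hs⟩ := hlit j hj
    have hc' : (i, σ i) ∈ φ.clause j := by
      rw [← h1, hs]; exact hc
    have hocc := mem_occ hj hc'
    have hp := posOf_pos hocc
    have hp' := posOf_le (φ := φ) (i := i) (j := j)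
    have hn : nxt φ i l = (i, l + 1) := by
      rw [nxt, if_pos (by omega)]
    have e1 : exS σ i l = σ i := by
      have : l % 2 = 1 := by omega
      simp [exS, this]
    have e2 : (!exS σ i (l + 1)) = σ i := by
      have : ¬ ((l + 1) % 2 = 1) := by omega
      simp [exS, this]
    rw [hn]
    simp only [e1, e2]
    refine ⟨_, .cons _ (V3.c1 j) _ _ (.cons _ V3.cs _ _ (.cons _ (V3.c2 j) _ _
      (.cons _ _ _ _ (.nil _)))), ?_, rfl, ?_⟩
    · intro e he
      simp only [List.mem_cons, List.not_mem_nil, or_false] at he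
      rw [mem_E0, mem_star]
      rcases he with rfl | rfl | rfl | rfl
      · refine .inl (.inr (.inr ⟨j, hj, i, σ i, hc', ?_⟩))
        rw [mem_zc, ← h2]; exact .inl rfl
      · exact .inr ⟨j, hj, .inl rfl⟩
      · exact .inr ⟨j, hj, .inr rfl⟩
      · refine .inl (.inr (.inr ⟨j, hj, i, σ i, hc', ?_⟩))
        have : 6 * posOf φ i j - 2 = l + 1 := by omega
        rw [mem_zc, this]; simp
    · intro j' hj' h1' h2'
      have hc2 : (i, σ i) ∈ φ.clause j' := by
        obtain ⟨hc, hs⟩ := hlit j' hj'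
        rw [← h1', hs]; exact hc
      have hocc' := mem_occ hj' hc2
      have hp2 := posOf_pos hocc'
      have : j' = j := posOf_inj hocc' hocc (by omega)
      subst this
      simp
  · rw [if_neg h]
    refine ⟨_, .single _ _, ?_, rfl, ?_⟩
    · intro e he
      rw [List.mem_singleton] at he
      subst he
      left
      rw [mem_E0]
      by_cases hlt : l < 6 * μ φ i
      · left
        rw [nxt, if_pos hlt]
        refine ⟨i, hi, ?_⟩
        rw [mem_X]
        refine .inl ⟨exS σ i l, l, hl, hlt, ?_⟩
        have : (!exS σ i (l + 1)) = exS σ i l := by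
          rcases Nat.mod_two_eq_zero_or_one l with h | h
          · have h' : (l + 1) % 2 = 1 := by omega
            simp [exS, h, h']
          · have h' : (l + 1) % 2 = 0 := by omega
            simp [exS, h, h']
        simp only [this]
      · right; left
        rw [nxt, if_neg hlt]
        have : l = 6 * μ φ i := by omega
        refine ⟨i, hi, ?_⟩
        rw [mem_Y, ← this]
        exact ⟨_, _, rfl⟩
    · intro j hj h1 h2
      exact (h ⟨j, hj, h1, h2⟩).elim

/-- The piece of the tour belonging to `(i, l)`. -/
def seg (σ : ℕ → Bool) (D : ℕ → ℕ → List (Sym2 V3)) (i l : ℕ) : List (Sym2 V3) :=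
  [s(vv (!exS σ i l) i l, V3.z i l), s(V3.z i l, vv (exS σ i l) i l)] ++ D i l

/-- The first `k` pieces for the variable `i`. -/
def blk (σ : ℕ → Bool) (D : ℕ → ℕ → List (Sym2 V3)) (i k : ℕ) : List (Sym2 V3) :=
  (List.range k).flatMap fun l => seg σ D i (l + 1)

/-- The pieces for the first `k` variables. -/
def blks (φ : CNF3) (σ : ℕ → Bool) (D : ℕ → ℕ → List (Sym2 V3)) (k : ℕ) : List (Sym2 V3) :=
  (List.range k).flatMap fun i => blk σ D i (6 * μ φ i)

theorem mem_seg_pl {φ : CNF3} (σ : ℕ → Bool) (D : ℕ → ℕ → List (Sym2 V3)) (i l : ℕ)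
    {e : Sym2 V3} (he : e ∈ Epl φ i l) : e ∈ seg σ D i l := by
  rw [mem_pl] at he
  obtain ⟨s, rfl⟩ := he
  simp only [seg, List.mem_append, List.mem_cons, List.not_mem_nil, or_false]
  left
  cases s <;> cases exS σ i l <;> simp

theorem blk_succ (σ : ℕ → Bool) (D : ℕ → ℕ → List (Sym2 V3)) (i k : ℕ) :
    blk σ D i (k + 1) = blk σ D i k ++ seg σ D i (k + 1) := by
  simp [blk, List.range_succ, List.flatMap_append]

theorem blks_succ (φ : CNF3) (σ : ℕ → Bool) (D : ℕ → ℕ → List (Sym2 V3)) (k : ℕ) :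
    blks φ σ D (k + 1) = blks φ σ D k ++ blk σ D k (6 * μ φ k) := by
  simp [blks, List.range_succ, List.flatMap_append]

theorem mem_blk {φ : CNF3} (σ : ℕ → Bool) (D : ℕ → ℕ → List (Sym2 V3)) (i l k : ℕ)
    (h : 1 ≤ l) (h' : l ≤ k) {e : Sym2 V3} (he : e ∈ seg σ D i l) : e ∈ blk σ D i k := by
  rw [blk, List.mem_flatMap]
  refine ⟨l - 1, by simp; omega, ?_⟩
  rwa [Nat.sub_add_cancel h]

theorem mem_blks {φ : CNF3} (σ : ℕ → Bool) (D : ℕ → ℕ → List (Sym2 V3)) (i l k : ℕ)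
    (hi : i < k) (h : 1 ≤ l) (h' : l ≤ 6 * μ φ i) {e : Sym2 V3} (he : e ∈ seg σ D i l) :
    e ∈ blks φ σ D k := by
  rw [blks, List.mem_flatMap]
  exact ⟨i, by simpa using hi, mem_blk (φ := φ) σ D i l _ h h' he⟩

theorem list_sum_range (f : ℕ → ℕ) (k : ℕ) :
    ((List.range k).map f).sum = ∑ i ∈ Finset.range k, f i := by
  induction k with
  | zero => rfl
  | succ k ih => rw [List.range_succ, Finset.sum_range_succ]; simp [ih]

open Classical in
theorem tour_of_sat (φ : CNF3) (hμ : ∀ i < φ.n, 1 ≤ μ φ i) (h : Satisfiable φ) :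
    ∃ u L, Trail u L u ∧ (∀ e ∈ L, e ∈ Eall φ) ∧ (∀ e ∈ Eall φ, e ∈ L) ∧ PrecRespecting φ L ∧
      2 * L.length ≤ 2 * (Eall φ).card + imb φ := by
  obtain ⟨σ, hσ⟩ := h
  choose! lit hlit using hσ
  rcases Nat.eq_zero_or_pos φ.n with hn | hn
  · have hm : φ.m = 0 := by
      by_contra hm
      have := φ.var_lt 0 (by omega) _ (hlit 0 (by omega)).1
      omega
    have hE : Eall φ = ∅ := by
      ext e
      rw [mem_all, E0_empty φ hn, mem_star, hm, hn]
      simp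
    refine ⟨V3.cs, [], .nil _, by simp, by simp [hE], ?_, by simp⟩
    intro q hq
    simp at hq
  choose! D hD1 hD2 hD3 hD4 using exists_link φ σ lit hlit
  -- the first vertex of the second part
  obtain ⟨L0, hL0, hE0⟩ : Circ (vv (!exS σ 0 1) 0 1) (E0 φ).val := by
    refine (circ_E0 φ hμ hn).rotate ?_
    refine ⟨s(vv false 0 1, vv true 0 1), ?_, ?_⟩
    · rw [Finset.mem_val, mem_E0]
      refine .inl ⟨0, hn, ?_⟩
      rw [mem_X]; simp
    · cases exS σ 0 1 <;> simp
  have memL0 : ∀ e, e ∈ L0 ↔ e ∈ E0 φ := by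
    intro e
    rw [← Finset.mem_val, ← hE0, Multiset.mem_coe]
  -- trails
  have tseg : ∀ i < φ.n, ∀ l, 1 ≤ l → l ≤ 6 * μ φ i → Trail (vv (!exS σ i l) i l) (seg σ D i l)
      (vv (!exS σ (nxt φ i l).1 (nxt φ i l).2) (nxt φ i l).1 (nxt φ i l).2) := by
    intro i hi l hl hl'
    exact .cons _ _ _ _ (.cons _ _ _ _ (hD1 i l hi hl hl'))
  have tblk : ∀ i < φ.n, ∀ k, k + 1 ≤ 6 * μ φ i → Trail (vv (!exS σ i 1) i 1) (blk σ D i (k + 1))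
      (vv (!exS σ (nxt φ i (k + 1)).1 (nxt φ i (k + 1)).2) (nxt φ i (k + 1)).1 (nxt φ i (k + 1)).2) := by
    intro i hi k
    induction k with
    | zero =>
      intro hk
      simpa [blk] using tseg i hi 1 le_rfl hk
    | succ k ih =>
      intro hk
      rw [blk_succ]
      refine (ih (by omega)).append ?_
      have hx : nxt φ i (k + 1) = (i, k + 2) := by rw [nxt, if_pos (by omega)]
      rw [hx]
      exact tseg i hi (k + 2) (by omega) hk
  have tblks : ∀ k, k ≤ φ.n → Trail (vv (!exS σ 0 1) 0 1) (blks φ σ D k)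
      (vv (!exS σ (k % φ.n) 1) (k % φ.n) 1) := by
    intro k
    induction k with
    | zero =>
      intro _
      simp only [Nat.zero_mod]
      exact .nil _
    | succ k ih =>
      intro hk
      rw [blks_succ]
      refine (ih (by omega)).append ?_
      have hm := hμ k (by omega)
      have := tblk k (by omega) (6 * μ φ k - 1) (by omega)
      rw [Nat.sub_add_cancel (by omega), nxt, if_neg (by omega)] at this
      rwa [Nat.mod_eq_of_lt (by omega : k < φ.n)]
  have tfin := tblks φ.n le_rfl
  rw [Nat.mod_self] at tfin
  -- precedence
  have pseg : ∀ i < φ.n, ∀ l, 1 ≤ l → l ≤ 6 * μ φ i → ∀ Q : Sym2 V3 → Prop, (∀ e ∈ E0 φ, Q e) →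
      (∀ i' l', validCI φ (.pl i' l') → (i' < i ∨ (i' = i ∧ l' < l)) → ∀ e ∈ Epl φ i' l', Q e) →
      PR φ Q (seg σ D i l) := by
    intro i hi l hl hl' Q h0 h1
    refine PR.of_class i l ?_ h0 h1
    intro e he i' l' he'
    simp only [seg, List.mem_append, List.mem_cons, List.not_mem_nil, or_false] at he
    rcases he with he | he
    · rw [mem_pl] at he'
      obtain ⟨s, rfl⟩ := he'
      rcases he with he | he <;> simp at he <;> simp [he]
    · exact (nonpl (hD2 i l hi hl hl' e he) _ _ he').elim
  have pblk : ∀ i < φ.n, ∀ Q : Sym2 V3 → Prop, (∀ e ∈ E0 φ, Q e) →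
      (∀ i' l', validCI φ (.pl i' l') → i' < i → ∀ e ∈ Epl φ i' l', Q e) →
      ∀ k, k ≤ 6 * μ φ i → PR φ Q (blk σ D i k) := by
    intro i hi Q h0 h1 k
    induction k with
    | zero =>
      intro _ A e B hA
      simp [blk] at hA
    | succ k ih =>
      intro hk
      rw [blk_succ]
      refine (ih (by omega)).append (pseg i hi (k + 1) (by omega) hk _ (fun e he => .inl (h0 e he)) ?_)
      rintro i' l' hv (hlt | ⟨rfl, hlt⟩) e he
      · exact .inl (h1 i' l' hv hlt e he)
      · exact .inr (mem_blk (φ := φ) σ D i' l' k hv.2.1 (by omega) (mem_seg_pl σ D i' l' he))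
  have pblks : ∀ Q : Sym2 V3 → Prop, (∀ e ∈ E0 φ, Q e) →
      ∀ k, k ≤ φ.n → PR φ Q (blks φ σ D k) := by
    intro Q h0 k
    induction k with
    | zero =>
      intro _ A e B hA
      simp [blks] at hA
    | succ k ih =>
      intro hk
      rw [blks_succ]
      refine (ih (by omega)).append (pblk k (by omega) _ (fun e he => .inl (h0 e he)) ?_ _ le_rfl)
      intro i' l' hv hlt e he
      exact .inr (mem_blks σ D i' l' k hlt hv.2.1 hv.2.2 (mem_seg_pl σ D i' l' he))
  refine ⟨_, L0 ++ blks φ σ D φ.n, hL0.append tfin, ?_, ?_, ?_, ?_⟩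
  · intro e he
    rw [mem_all]
    rw [List.mem_append, memL0] at he
    rcases he with he | he
    · exact .inl he
    · simp only [blks, blk, List.mem_flatMap, List.mem_range] at he
      obtain ⟨i, hi, l, hl, he⟩ := he
      simp only [seg, List.mem_append, List.mem_cons, List.not_mem_nil, or_false] at he
      rcases he with he | he
      · refine .inr (.inr ⟨i, hi, l + 1, by omega, by omega, ?_⟩)
        rw [mem_pl]
        rcases he with rfl | rfl
        · exact ⟨_, rfl⟩
        · exact ⟨_, Sym2.eq_swap⟩
      · have := hD2 i (l + 1) hi (by omega) (by omega) e he
        tauto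
  · intro e he
    rw [mem_all] at he
    rw [List.mem_append, memL0]
    rcases he with he | he | ⟨i, hi, l, hl, hl', he⟩
    · exact .inl he
    · right
      rw [mem_star] at he
      obtain ⟨j, hj, he⟩ := he
      obtain ⟨hc, hs⟩ := hlit j hj
      have hi := φ.var_lt j hj _ hc
      have hp := posOf_pos (mem_occ (i := (lit j).1) (s := (lit j).2) hj hc)
      have hp' := posOf_le (φ := φ) (i := (lit j).1) (j := j)
      have h4 := hD4 (lit j).1 (6 * posOf φ (lit j).1 j - 3) hi (by omega) (by omega) j hj rfl rfl
      refine mem_blks σ D (lit j).1 (6 * posOf φ (lit j).1 j - 3) _ hi (by omega) (by omega) ?_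
      rw [seg, List.mem_append]
      right
      rcases he with rfl | rfl
      · exact h4.1
      · exact h4.2
    · exact .inr (mem_blks σ D i l _ hi hl hl' (mem_seg_pl σ D i l he))
  · apply PR.prec
    refine PR.append ?_ (pblks _ ?_ _ le_rfl)
    · intro A e B hA C hC heC C' hC' hp e' he'
      have he : e ∈ E0 φ := by rw [← memL0, hA]; simp
      cases C with
      | e0 => cases C' <;> simp [HCPPFormal.prec] at hp
      | star => cases C' <;> simp [HCPPFormal.prec] at hp
      | pl a b => exact (nonpl (.inl he) _ _ heC).elim
    · intro e he
      exact .inr ((memL0 e).2 he)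
  · have hl0 : L0.length = (E0 φ).card := by
      have := congrArg Multiset.card hE0
      simpa using this
    have hlen : (blks φ σ D φ.n).length = ∑ i ∈ Finset.range φ.n, ∑ l ∈ Finset.range (6 * μ φ i),
        (3 + 3 * if ∃ j < φ.m, (lit j).1 = i ∧ l + 1 = 6 * posOf φ i j - 3 then 1 else 0) := by
      simp only [blks, blk, List.length_flatMap]
      rw [list_sum_range]
      apply Finset.sum_congr rfl
      intro i hi
      rw [list_sum_range]
      apply Finset.sum_congr rfl
      intro l hl
      rw [Finset.mem_range] at hi hl
      rw [seg, List.length_append, hD3 i (l + 1) hi (by omega) (by omega)]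
      simp only [List.length_cons, List.length_nil]
      omega
    have hcount : ∑ i ∈ Finset.range φ.n, ∑ l ∈ Finset.range (6 * μ φ i),
        (if ∃ j < φ.m, (lit j).1 = i ∧ l + 1 = 6 * posOf φ i j - 3 then 1 else 0) ≤ φ.m := by
      calc _ ≤ ∑ i ∈ Finset.range φ.n, ∑ l ∈ Finset.range (6 * μ φ i), ∑ j ∈ Finset.range φ.m,
            (if (lit j).1 = i then (if l + 1 = 6 * posOf φ i j - 3 then 1 else 0) else 0) := by
            refine Finset.sum_le_sum fun i _ => Finset.sum_le_sum fun l _ => ?_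
            split_ifs with hj
            · obtain ⟨j, hj, h1, h2⟩ := hj
              refine le_trans ?_ (Finset.single_le_sum (fun _ _ => Nat.zero_le _)
                (Finset.mem_range.2 hj))
              rw [if_pos h1, if_pos h2]
            · exact Nat.zero_le _
        _ = ∑ j ∈ Finset.range φ.m, ∑ i ∈ Finset.range φ.n, ∑ l ∈ Finset.range (6 * μ φ i),
            (if (lit j).1 = i then (if l + 1 = 6 * posOf φ i j - 3 then 1 else 0) else 0) := by
            rw [Finset.sum_comm]
            refine Finset.sum_congr rfl fun i _ => ?_
            rw [Finset.sum_comm]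
        _ ≤ ∑ j ∈ Finset.range φ.m, 1 := by
            refine Finset.sum_le_sum fun j _ => ?_
            simp only [Finset.sum_ite_irrel, Finset.sum_const_zero, Finset.sum_ite_eq]
            split_ifs
            · rw [← Finset.sum_filter, Finset.sum_const, smul_eq_mul, mul_one,
                Finset.card_le_one]
              intro a ha b hb
              simp only [Finset.mem_filter] at ha hb
              omega
            · exact Nat.zero_le _
        _ = φ.m := by simp
    rw [imb_eq φ hμ, U_card, all_card, List.length_append, hl0, hlen]
    simp only [Finset.sum_add_distrib, ← Finset.mul_sum, Finset.sum_const, Finset.card_range,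
      smul_eq_mul, mul_comm _ 3] at *
    omega

/-! ### From a tight tour to a satisfying assignment -/

theorem sum_mDeg_le (U : Finset V) (M : Multiset (Sym2 V)) :
    ∑ v ∈ U, mDeg M v ≤ 2 * Multiset.card M := by
  induction M using Multiset.induction_on with
  | empty => simp [mDeg]
  | cons e M ih =>
    simp only [mDeg_cons, Finset.sum_add_distrib, Multiset.card_cons]
    have : ∑ v ∈ U, (if e = Sym2.diag v then 2 else if v ∈ e then 1 else 0) ≤ 2 := by
      induction e using Sym2.ind with
      | _ a b =>
        simp only [edge_deg, Finset.sum_add_distrib, Finset.sum_ite_eq']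
        split_ifs <;> omega
    omega

theorem sum_mDeg_lt (U : Finset V) (M : Multiset (Sym2 V)) (a b : V) (he : s(a, b) ∈ M)
    (ha : a ∉ U) : ∑ v ∈ U, mDeg M v < 2 * Multiset.card M := by
  obtain ⟨M, rfl⟩ := Multiset.exists_cons_of_mem he
  have := sum_mDeg_le U M
  simp only [mDeg_cons, Finset.sum_add_distrib, Multiset.card_cons, edge_deg, Finset.sum_ite_eq']
  split_ifs
  all_goals omega

theorem mDeg_mem {M : Multiset (Sym2 V)} {e : Sym2 V} {v : V} (hv : v ∈ e) (he : e ∈ M) :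
    1 ≤ mDeg M v := by
  obtain ⟨M, rfl⟩ := Multiset.exists_cons_of_mem he
  rw [mDeg_cons]
  split_ifs
  all_goals omega

/-- Degree-one vertices lie on a single edge. -/
theorem mDeg_one_unique {M : Multiset (Sym2 V)} {v : V} (h : mDeg M v ≤ 1) {e e' : Sym2 V}
    (he : e ∈ M) (he' : e' ∈ M) (hv : v ∈ e) (hv' : v ∈ e') : e = e' := by
  by_contra hne
  obtain ⟨M, rfl⟩ := Multiset.exists_cons_of_mem he
  have h1 : e' ∈ M := by
    rcases Multiset.mem_cons.1 he' with h | h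
    · exact (hne h.symm).elim
    · exact h
  have h2 := mDeg_mem hv' h1
  rw [mDeg_cons, if_pos hv] at h
  split_ifs at h <;> omega

theorem mDeg_one_count {M : Multiset (Sym2 V)} {v : V} (h : mDeg M v ≤ 1) {e : Sym2 V}
    (hv : v ∈ e) : M.count e ≤ 1 := by
  by_contra hc
  have he : e ∈ M := Multiset.count_pos.1 (by omega)
  obtain ⟨M, rfl⟩ := Multiset.exists_cons_of_mem he
  rw [Multiset.count_cons_self] at hc
  have h1 : e ∈ M := Multiset.count_pos.1 (by omega)
  have h2 := mDeg_mem hv h1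
  rw [mDeg_cons, if_pos hv] at h
  split_ifs at h <;> omega

/-- The extra edges of a tight tour form a perfect matching on `Uset φ`. -/
theorem exists_matching (φ : CNF3) (hμ : ∀ i < φ.n, 1 ≤ μ φ i) {u : V3} {L : List (Sym2 V3)}
    (ht : Trail u L u) (hsub : ∀ e ∈ L, e ∈ Eall φ) (hcov : ∀ e ∈ Eall φ, e ∈ L)
    (hlen : 2 * L.length ≤ 2 * (Eall φ).card + imb φ) :
    ∃ M : Multiset (Sym2 V3),
      (∀ e, L.count e = (if e ∈ Eall φ then 1 else 0) + M.count e) ∧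
      (∀ v ∈ Uset φ, ∃ w, s(v, w) ∈ M) ∧
      (∀ v ∈ Uset φ, ∀ w w', s(v, w) ∈ M → s(v, w') ∈ M → w = w') ∧
      (∀ e ∈ M, M.count e ≤ 1) ∧
      (∀ v w, s(v, w) ∈ M → v ∈ Uset φ ∧ w ∈ Uset φ ∧ s(v, w) ∈ Eall φ) := by
  have hle : (Eall φ).val ≤ (L : Multiset (Sym2 V3)) := by
    rw [Multiset.le_iff_subset (Eall φ).nodup]
    intro e he
    exact hcov e he
  obtain ⟨M, hM⟩ := Multiset.le_iff_exists_add.1 hle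
  have hcard : 2 * Multiset.card M ≤ (Uset φ).card := by
    have := congrArg Multiset.card hM
    rw [← imb_eq φ hμ]
    simp at this
    omega
  have hodd : ∀ v ∈ Uset φ, 1 ≤ mDeg M v := by
    intro v hv
    rw [← odd_iff φ hμ] at hv
    have h1 := (ht.parity v)
    rw [hM, mDeg_add] at h1
    by_contra h0
    have : mDeg M v = 0 := by omega
    rw [this] at h1
    grind
  have hsum : (Uset φ).card ≤ ∑ v ∈ Uset φ, mDeg M v := by
    rw [Finset.card_eq_sum_ones]
    exact Finset.sum_le_sum hodd
  have hone : ∀ v ∈ Uset φ, mDeg M v ≤ 1 := by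
    intro v hv
    by_contra hlt
    have : ∑ v ∈ Uset φ, 1 < ∑ v ∈ Uset φ, mDeg M v :=
      Finset.sum_lt_sum hodd ⟨v, hv, by omega⟩
    rw [← Finset.card_eq_sum_ones] at this
    have := sum_mDeg_le (Uset φ) M
    omega
  have hends : ∀ v w, s(v, w) ∈ M → v ∈ Uset φ := by
    intro v w hvw
    by_contra hv
    have := sum_mDeg_lt (Uset φ) M v w hvw hv
    omega
  refine ⟨M, ?_, ?_, ?_, ?_, ?_⟩
  · intro e
    have := congrArg (Multiset.count e) hM
    rw [Multiset.coe_count, Multiset.count_add, Multiset.count_eq_of_nodup (Eall φ).nodup] at this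
    exact this
  · intro v hv
    have h1 := hodd v hv
    by_contra hne
    push Not at hne
    have : mDeg M v = 0 := by
      rw [mDeg, Multiset.sum_eq_zero_iff]
      intro x hx
      rw [Multiset.mem_map] at hx
      obtain ⟨e, he, rfl⟩ := hx
      have hnv : v ∉ e := by
        intro hve
        obtain ⟨w, rfl⟩ := hve
        exact hne w he
      have : e ≠ Sym2.diag v := by
        rintro rfl
        exact hnv (by simp [Sym2.diag])
      simp [hnv, this]
    omega
  · intro v hv w w' h1 h2
    have := mDeg_one_unique (hone v hv) h1 h2 (by simp) (by simp)
    simp at this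
    rcases this with h | ⟨h, h'⟩
    · exact h
    · exact h'.trans h
  · intro e he
    induction e using Sym2.ind with
    | _ a b => exact mDeg_one_count (hone a (hends a b he)) (by simp)
  · intro v w h
    refine ⟨hends v w h, hends w v (by rwa [Sym2.eq_swap]), hsub _ ?_⟩
    rw [← Multiset.mem_coe, hM]
    exact Multiset.mem_add.2 (.inr h)

/-! Adjacency facts -/

theorem vv_mem_all {φ : CNF3} {s : Bool} {i l : ℕ} {w : V3} (h : s(vv s i l, w) ∈ Eall φ) :
    s(vv s i l, w) ∈ E0 φ ∨ w = V3.z i l := by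
  rw [mem_all] at h
  rcases h with h | h | ⟨i', hi, l', hl, hl', h⟩
  · exact .inl h
  · rw [mem_star] at h
    obtain ⟨j, _, h | h⟩ := h <;> simp at h
  · rw [mem_pl] at h
    obtain ⟨s', h⟩ := h
    simp at h
    right
    obtain ⟨⟨_, rfl, rfl⟩, h⟩ := h
    exact h

theorem z_mem_all {φ : CNF3} {i l : ℕ} {w : V3} (h : s(V3.z i l, w) ∈ Eall φ) :
    i < φ.n ∧ 1 ≤ l ∧ l ≤ 6 * μ φ i ∧ ∃ s, w = vv s i l := by
  rw [mem_all] at h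
  rcases h with h | h | ⟨i', hi, l', hl, hl', h⟩
  · exact ((E0_no_cs_z φ _ h).2 i l (by simp)).elim
  · rw [mem_star] at h
    obtain ⟨j, _, h | h⟩ := h <;> simp at h
  · rw [mem_pl] at h
    obtain ⟨s', h⟩ := h
    simp at h
    obtain ⟨⟨rfl, rfl⟩, h⟩ := h
    exact ⟨hi, hl, hl', s', h⟩

theorem c1_mem_all {φ : CNF3} {j : ℕ} {w : V3} (h : s(V3.c1 j, w) ∈ Eall φ) (hw : w ∈ Uset φ) :
    j < φ.m ∧ ∃ i s, (i, s) ∈ φ.clause j ∧ w = vv s i (6 * posOf φ i j - 3) := by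
  rw [mem_all, mem_E0] at h
  rw [mem_U] at hw
  rcases h with (⟨i, hi, h⟩ | ⟨i, hi, h⟩ | ⟨j', hj, i, s, h', h⟩) | h | ⟨i', hi, l', hl, hl', h⟩
  · rw [mem_X] at h
    simp at h
  · rw [mem_Y] at h
    simp at h
  · rw [mem_zc] at h
    simp at h
    rcases h with ⟨rfl, rfl⟩ | ⟨rfl, rfl⟩
    · exact ⟨hj, i, s, h', rfl⟩
    · simp at hw
  · rw [mem_star] at h
    obtain ⟨j, _, h | h⟩ := h
    · simp at h
      obtain ⟨_, rfl⟩ := h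
      simp at hw
    · simp at h
  · rw [mem_pl] at h
    simp at h

theorem vv_c1 {φ : CNF3} {s : Bool} {i l j : ℕ} (h : s(vv s i l, V3.c1 j) ∈ Eall φ) :
    j < φ.m ∧ (i, s) ∈ φ.clause j ∧ l = 6 * posOf φ i j - 3 := by
  rw [mem_all, mem_E0] at h
  rcases h with (⟨i, hi, h⟩ | ⟨i, hi, h⟩ | ⟨j', hj, i', s', h', h⟩) | h | ⟨i', hi, l', hl, hl', h⟩
  · rw [mem_X] at h
    simp at h
  · rw [mem_Y] at h
    simp at h
  · rw [mem_zc] at h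
    simp at h
    obtain ⟨⟨rfl, rfl, rfl⟩, rfl⟩ := h
    exact ⟨hj, h', rfl⟩
  · rw [mem_star] at h
    simp at h
  · rw [mem_pl] at h
    simp at h

theorem vv_c2 {φ : CNF3} {s : Bool} {i l j : ℕ} (h : s(vv s i l, V3.c2 j) ∈ Eall φ) :
    j < φ.m ∧ (i, s) ∈ φ.clause j ∧ l = 6 * posOf φ i j - 2 := by
  rw [mem_all, mem_E0] at h
  rcases h with (⟨i, hi, h⟩ | ⟨i, hi, h⟩ | ⟨j', hj, i', s', h', h⟩) | h | ⟨i', hi, l', hl, hl', h⟩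
  · rw [mem_X] at h
    simp at h
  · rw [mem_Y] at h
    simp at h
  · rw [mem_zc] at h
    simp at h
    obtain ⟨⟨rfl, rfl, rfl⟩, rfl⟩ := h
    exact ⟨hj, h', rfl⟩
  · rw [mem_star] at h
    simp at h
  · rw [mem_pl] at h
    simp at h

theorem vv_vv {φ : CNF3} (hμ : ∀ i < φ.n, 1 ≤ μ φ i) {s s' : Bool} {i l : ℕ} (hl : 1 ≤ l)
    (h : s(vv s i l, vv s' i (l + 1)) ∈ Eall φ) : s = s' := by
  rw [mem_all, mem_E0] at h
  rcases h with (⟨i, hi, h⟩ | ⟨i, hi, h⟩ | ⟨j', hj, i', s', h', h⟩) | h | ⟨i', hi, l', hl, hl', h⟩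
  · rw [mem_X] at h
    simp at h
    grind
  · have := hμ i hi
    rw [mem_Y] at h
    obtain ⟨a, b, h⟩ := h
    simp only [Sym2.eq_iff, vv_inj] at h
    omega
  · rw [mem_zc] at h
    simp at h
  · rw [mem_star] at h
    simp at h
  · rw [mem_pl] at h
    simp at h

/-- A tight tour together with the matching of its extra edges. -/
structure TT (φ : CNF3) (u : V3) (L : List (Sym2 V3)) (M : Multiset (Sym2 V3)) : Prop where
  hμ : ∀ i < φ.n, 1 ≤ μ φ i
  ht : Trail u L u
  hsub : ∀ e ∈ L, e ∈ Eall φ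
  hcov : ∀ e ∈ Eall φ, e ∈ L
  hpr : PR φ (fun _ => False) L
  hcount : ∀ e, L.count e = (if e ∈ Eall φ then 1 else 0) + M.count e
  hex : ∀ v ∈ Uset φ, ∃ w, s(v, w) ∈ M
  huniq : ∀ v ∈ Uset φ, ∀ w w', s(v, w) ∈ M → s(v, w') ∈ M → w = w'
  hone : ∀ e ∈ M, M.count e ≤ 1
  hends : ∀ v w, s(v, w) ∈ M → v ∈ Uset φ ∧ w ∈ Uset φ ∧ s(v, w) ∈ Eall φ

theorem pl_mem_all {φ : CNF3} {i l : ℕ} (hi : i < φ.n) (hl : 1 ≤ l) (hl' : l ≤ 6 * μ φ i)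
    (s : Bool) : s(vv s i l, V3.z i l) ∈ Eall φ := by
  rw [mem_all]
  exact .inr (.inr ⟨i, hi, l, hl, hl', (mem_pl φ i l _).2 ⟨s, rfl⟩⟩)

theorem vv_mem_U {φ : CNF3} {i l : ℕ} (hi : i < φ.n) (hl : 1 ≤ l) (hl' : l ≤ 6 * μ φ i)
    (s : Bool) : vv s i l ∈ Uset φ := by
  rw [mem_U]
  exact .inl ⟨i, hi, l, hl, hl', s, rfl⟩

theorem TT.count_pl {φ : CNF3} {u : V3} {L : List (Sym2 V3)} {M : Multiset (Sym2 V3)}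
    (T : TT φ u L M) {e : Sym2 V3} {i l : ℕ} (he : e ∈ Epl φ i l) : L.count e ≤ 1 := by
  rw [T.hcount]
  have : M.count e = 0 := by
    rw [Multiset.count_eq_zero]
    intro h
    obtain ⟨s, rfl⟩ := (mem_pl φ i l e).1 he
    have := (T.hends _ _ h).2.1
    rw [mem_U] at this
    simp at this
  split_ifs <;> omega

theorem TT.u_ne_z {φ : CNF3} {u : V3} {L : List (Sym2 V3)} {M : Multiset (Sym2 V3)}
    (T : TT φ u L M) {i : ℕ} (hi : i < φ.n) (k l : ℕ) : u ≠ V3.z k l := by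
  rintro rfl
  have h0 : s(vv false i 1, vv true i 1) ∈ E0 φ := by
    rw [mem_E0]
    exact .inl ⟨i, hi, (mem_X φ i _).2 (.inr (.inr rfl))⟩
  have hmem := T.hcov _ ((mem_all φ _).2 (.inl h0))
  cases L with
  | nil => simp at hmem
  | cons e L =>
    obtain ⟨x, rfl, -⟩ := T.ht.cons_inv
    obtain ⟨h1, h2, h3, s, rfl⟩ := z_mem_all (T.hsub _ (List.mem_cons_self ..))
    have := T.hpr [] _ L rfl (.pl k l) ⟨h1, h2, h3⟩
      ((mem_pl φ k l _).2 ⟨s, Sym2.eq_swap⟩) .e0 trivial trivial _ h0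
    simp at this

/-- A walk traversing `P_i^l` once traverses it in one go. -/
theorem visit {φ : CNF3} {i l : ℕ} {u x : V3} {L : List (Sym2 V3)} (h : Trail u L x)
    (hu : u ≠ V3.z i l) (hx : x ≠ V3.z i l) (hsub : ∀ e ∈ L, e ∈ Eall φ)
    (hc : ∀ e ∈ Epl φ i l, L.count e ≤ 1) (s : Bool) (hm : s(vv s i l, V3.z i l) ∈ L) :
    ∃ a A B, L = A ++ s(vv a i l, V3.z i l) :: s(V3.z i l, vv (!a) i l) :: B ∧
      Trail u A (vv a i l) ∧ Trail (vv (!a) i l) B x := by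
  obtain ⟨A, B, rfl, h1, h2⟩ := h.split_at (v := V3.z i l) ⟨_, hm, by simp⟩
  rcases List.eq_nil_or_concat' A with rfl | ⟨A, e, rfl⟩
  · exact (hu h1.nil_inv).elim
  cases B with
  | nil => exact (hx h2.nil_inv.symm).elim
  | cons e' B =>
    obtain ⟨y, rfl, h3⟩ := h1.concat_inv
    obtain ⟨y', rfl, h4⟩ := h2.cons_inv
    have g1 : s(V3.z i l, y) ∈ Eall φ := by
      rw [Sym2.eq_swap]
      exact hsub _ (by simp)
    obtain ⟨-, -, -, a, rfl⟩ := z_mem_all g1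
    obtain ⟨-, -, -, a', rfl⟩ := z_mem_all (hsub s(V3.z i l, y') (by simp))
    have hne : a ≠ a' := by
      rintro rfl
      have := hc s(vv a i l, V3.z i l) ((mem_pl φ i l _).2 ⟨a, rfl⟩)
      rw [Sym2.eq_swap (a := V3.z i l)] at this
      simp [List.count_append] at this
      omega
    have : a' = !a := by cases a <;> cases a' <;> simp_all
    subst this
    exact ⟨a, A, B, by simp, h3, h4⟩

/-- The tour enters `P_i^l` at the side `s`. -/
def Ent (L : List (Sym2 V3)) (s : Bool) (i l : ℕ) : Prop :=
  ∃ A B, L = A ++ s(vv s i l, V3.z i l) :: s(V3.z i l, vv (!s) i l) :: B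

theorem order_unique {α : Type} [DecidableEq α] {L A B A' B' : List α} {e e' : α} (hne : e ≠ e')
    (h : L = A ++ e :: e' :: B) (h' : L = A' ++ e' :: e :: B') (hc : L.count e ≤ 1)
    (hc' : L.count e' ≤ 1) : False := by
  rw [h'] at h
  rcases List.append_eq_append_iff.1 h with ⟨K, h1, h2⟩ | ⟨K, h1, h2⟩
  · cases K with
    | nil => simp at h2; exact hne h2.1.symm
    | cons k K =>
      simp at h2
      obtain ⟨rfl, h2⟩ := h2
      rw [h', h2] at hc'
      simp [List.count_append] at hc'
      grind
  · cases K with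
    | nil => simp at h2; exact hne h2.1
    | cons k K =>
      simp at h2
      obtain ⟨rfl, h2⟩ := h2
      rw [h', h1] at hc
      simp [List.count_append] at hc
      grind

theorem TT.ent_unique {φ : CNF3} {u : V3} {L : List (Sym2 V3)} {M : Multiset (Sym2 V3)}
    (T : TT φ u L M) {s s' : Bool} {i l : ℕ} (h : Ent L s i l) (h' : Ent L s' i l) : s = s' := by
  by_contra hne
  have : s' = !s := by cases s <;> cases s' <;> simp_all
  subst this
  obtain ⟨A, B, h⟩ := h
  obtain ⟨A', B', h'⟩ := h'
  rw [Bool.not_not, Sym2.eq_swap (a := vv (!s) i l)] at h'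
  rw [Sym2.eq_swap (a := vv s i l)] at h
  refine order_unique ?_ h h' ?_ ?_
  · simp
  · exact T.count_pl ((mem_pl φ i l _).2 ⟨s, Sym2.eq_swap⟩)
  · exact T.count_pl ((mem_pl φ i l _).2 ⟨!s, Sym2.eq_swap⟩)

/-- Between `P_i^l` and `P_i^(l+1)`, the tour only uses extra edges and edges at `c*`. -/
theorem TT.consec {φ : CNF3} {u : V3} {L : List (Sym2 V3)} {M : Multiset (Sym2 V3)}
    (T : TT φ u L M) {i l : ℕ} (hi : i < φ.n) (hl : 1 ≤ l) (hl' : l + 1 ≤ 6 * μ φ i) :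
    ∃ a b C, Ent L a i l ∧ Ent L b i (l + 1) ∧ Trail (vv (!a) i l) C (vv b i (l + 1)) ∧
      (∀ e ∈ C, e ∈ Eall φ ∧ (∀ i' l', e ∉ Epl φ i' l') ∧
        (e ∈ E0 φ → C.count e ≤ M.count e)) := by
  obtain ⟨b, P, B, hL, hP, hB⟩ := visit T.ht (T.u_ne_z hi i (l + 1)) (T.u_ne_z hi i (l + 1)) T.hsub
    (fun e he => T.count_pl he) true (T.hcov _ (pl_mem_all hi (by omega) hl' true))
  have hv : validCI φ (.pl i l) := ⟨hi, hl, by omega⟩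
  have hv' : validCI φ (.pl i (l + 1)) := ⟨hi, by omega, hl'⟩
  have hmem : s(vv true i l, V3.z i l) ∈ P := by
    have := T.hpr P _ _ hL (.pl i (l + 1)) hv' ((mem_pl φ i (l + 1) _).2 ⟨b, rfl⟩)
      (.pl i l) hv (by simp [prec]) _ ((mem_pl φ i l _).2 ⟨true, rfl⟩)
    simpa using this
  obtain ⟨a, A, C, rfl, hA, hC⟩ := visit hP (T.u_ne_z hi i l) (by simp)
    (fun e he => T.hsub e (by rw [hL]; exact List.mem_append_left _ he))
    (fun e he => by
      have := T.count_pl he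
      rw [hL, List.count_append] at this
      omega) true hmem
  have hcL : ∀ e, L.count e = A.count e + [s(vv a i l, V3.z i l)].count e +
      [s(V3.z i l, vv (!a) i l)].count e + C.count e +
      [s(vv b i (l + 1), V3.z i (l + 1))].count e +
      [s(V3.z i (l + 1), vv (!b) i (l + 1))].count e + B.count e := by
    intro e
    rw [hL]
    simp only [List.count_append, List.count_cons, List.count_nil]
    omega
  have hbefore : ∀ C', validCI φ C' → prec C' (.pl i l) → ∀ e ∈ classEdges φ C', e ∈ A := by
    intro C' h1 h2 e h3
    have := T.hpr A _ (s(V3.z i l, vv (!a) i l) :: (C ++ s(vv b i (l + 1), V3.z i (l + 1)) ::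
      s(V3.z i (l + 1), vv (!b) i (l + 1)) :: B)) (by rw [hL]; simp) (.pl i l) hv
      ((mem_pl φ i l _).2 ⟨a, rfl⟩) C' h1 h2 e h3
    simpa using this
  have hlev : ∀ (c : Bool) (k m : ℕ) (e : Sym2 V3), e ∈ Epl φ k m →
      1 ≤ [s(vv c k m, V3.z k m)].count e + [s(V3.z k m, vv (!c) k m)].count e := by
    intro c k m e he
    obtain ⟨s, rfl⟩ := (mem_pl φ k m e).1 he
    rw [Sym2.eq_swap (a := V3.z k m)]
    by_cases hs : s = c
    · subst hs; simp
    · have : s = !c := by cases s <;> cases c <;> simp_all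
      subst this; simp
  have hsubC : ∀ e ∈ C, e ∈ Eall φ := fun e he => T.hsub e (by rw [hL]; simp [he])
  refine ⟨a, b, C, ⟨A, _, hL.trans (by rw [List.append_assoc, List.cons_append, List.cons_append])⟩,
    ⟨_, _, hL⟩, hC, fun e he => ⟨hsubC e he, ?_, ?_⟩⟩
  · intro i' l' hpl
    have hcC : 1 ≤ C.count e := List.one_le_count_iff.2 he
    have h1 := T.count_pl hpl
    rw [hcL] at h1
    have hval : i' < φ.n ∧ 1 ≤ l' ∧ l' ≤ 6 * μ φ i' := by
      obtain ⟨s, rfl⟩ := (mem_pl φ i' l' e).1 hpl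
      have := hsubC _ he
      rw [Sym2.eq_swap] at this
      obtain ⟨h1, h2, h3, -⟩ := z_mem_all this
      exact ⟨h1, h2, h3⟩
    by_cases hlt : i' < i ∨ (i' = i ∧ l' < l)
    · have := List.one_le_count_iff.2 (hbefore (.pl i' l') hval hlt e hpl)
      omega
    by_cases heq : i' = i ∧ l' = l
    · obtain ⟨rfl, rfl⟩ := heq
      have := hlev a _ _ e hpl
      omega
    by_cases heq : i' = i ∧ l' = l + 1
    · obtain ⟨rfl, rfl⟩ := heq
      have := hlev b _ _ e hpl
      omega
    obtain ⟨C1, C2, rfl⟩ := List.append_of_mem he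
    have h2 := T.hpr (A ++ s(vv a i l, V3.z i l) :: s(V3.z i l, vv (!a) i l) :: C1) e
      (C2 ++ s(vv b i (l + 1), V3.z i (l + 1)) :: s(V3.z i (l + 1), vv (!b) i (l + 1)) :: B)
      (by rw [hL]; simp only [List.append_assoc, List.cons_append]) (.pl i' l') hval hpl
      (.pl i (l + 1)) hv' (by simp only [prec]; omega) _ ((mem_pl φ i (l + 1) _).2 ⟨b, rfl⟩)
    have h3 := T.count_pl ((mem_pl φ i (l + 1) _).2 ⟨b, rfl⟩)
    have h4 := List.one_le_count_iff.2 (h2.resolve_left id)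
    rw [hL] at h3
    simp only [List.count_append, List.count_cons] at h3 h4
    simp at h3 h4
    omega
  · intro h0
    have h1 := List.one_le_count_iff.2 (hbefore .e0 trivial trivial e h0)
    have h2 := hcL e
    rw [T.hcount e, if_pos (hsubC e he)] at h2
    omega

/-- The first vertex after `x` on a walk of extra edges is the matching partner of `x`. -/
theorem TT.first {φ : CNF3} {u : V3} {L : List (Sym2 V3)} {M : Multiset (Sym2 V3)}
    (T : TT φ u L M) {s : Bool} {i l : ℕ} {y : V3} {C : List (Sym2 V3)}
    (hC : Trail (vv s i l) C y) (hy : vv s i l ≠ y)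
    (h : ∀ e ∈ C, e ∈ Eall φ ∧ (∀ i' l', e ∉ Epl φ i' l') ∧ (e ∈ E0 φ → C.count e ≤ M.count e)) :
    ∃ x, s(vv s i l, x) ∈ M ∧ ∀ s' i' l', x = vv s' i' l' → x = y := by
  have key : ∀ s i l x, s(vv s i l, x) ∈ C → C.count s(vv s i l, x) ≤ M.count s(vv s i l, x) ∧
      s(vv s i l, x) ∈ M := by
    intro s i l x hx
    obtain ⟨h1, h2, h3⟩ := h _ hx
    rcases vv_mem_all h1 with h0 | rfl
    · have h4 := h3 h0
      have h5 := List.one_le_count_iff.2 hx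
      exact ⟨h4, Multiset.count_pos.1 (by omega)⟩
    · exact (h2 i l ((mem_pl φ i l _).2 ⟨s, rfl⟩)).elim
  cases C with
  | nil => exact (hy hC.nil_inv).elim
  | cons e C =>
    obtain ⟨x, rfl, hC1⟩ := hC.cons_inv
    have h1 := key s i l x (by simp)
    refine ⟨x, h1.2, ?_⟩
    rintro s' i' l' rfl
    by_contra hne
    cases C with
    | nil => exact hne hC1.nil_inv
    | cons e C =>
      obtain ⟨w, rfl, hC2⟩ := hC1.cons_inv
      have h2 := key s' i' l' w (by simp)
      have h3 := h1.2
      rw [Sym2.eq_swap] at h3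
      obtain rfl := T.huniq _ (T.hends _ _ h3).1 _ _ h3 h2.2
      have h4 := T.hone _ h1.2
      have h5 := h1.1
      rw [Sym2.eq_swap (a := vv s' i' l')] at h5
      simp at h5
      omega

theorem TT.step {φ : CNF3} {u : V3} {L : List (Sym2 V3)} {M : Multiset (Sym2 V3)}
    (T : TT φ u L M) {i l : ℕ} (hi : i < φ.n) (hl : 1 ≤ l) (hl' : l + 1 ≤ 6 * μ φ i) :
    ∃ a b, Ent L a i l ∧ Ent L b i (l + 1) ∧
      (∃ x, s(vv (!a) i l, x) ∈ M ∧ ∀ s' i' l', x = vv s' i' l' → x = vv b i (l + 1)) ∧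
      (∃ y, s(vv b i (l + 1), y) ∈ M ∧ ∀ s' i' l', y = vv s' i' l' → y = vv (!a) i l) := by
  obtain ⟨a, b, C, ha, hb, hC, h⟩ := T.consec hi hl hl'
  refine ⟨a, b, ha, hb, T.first hC (by simp) h, T.first hC.reverse (by simp) ?_⟩
  intro e he
  rw [List.count_reverse]
  exact h e (List.mem_reverse.1 he)

/-- Possible matching partners of a `t`/`f` vertex. -/
theorem TT.partner {φ : CNF3} {u : V3} {L : List (Sym2 V3)} {M : Multiset (Sym2 V3)}
    (T : TT φ u L M) {s : Bool} {i l : ℕ} {x : V3} (h : s(vv s i l, x) ∈ M) :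
    (∃ s' i' l', x = vv s' i' l') ∨
    ∃ j < φ.m, (i, s) ∈ φ.clause j ∧ 1 ≤ posOf φ i j ∧
      (l = 6 * posOf φ i j - 3 ∨ l = 6 * posOf φ i j - 2) := by
  obtain ⟨-, hx, hE⟩ := T.hends _ _ h
  rw [mem_U] at hx
  rcases hx with ⟨i', _, l', _, _, s', rfl⟩ | ⟨j, hj, rfl | rfl⟩
  · exact .inl ⟨s', i', l', rfl⟩
  · obtain ⟨h1, h2, h3⟩ := vv_c1 hE
    exact .inr ⟨j, hj, h2, posOf_pos (mem_occ hj h2), .inl h3⟩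
  · obtain ⟨h1, h2, h3⟩ := vv_c2 hE
    exact .inr ⟨j, hj, h2, posOf_pos (mem_occ hj h2), .inr h3⟩

theorem TT.alt {φ : CNF3} {u : V3} {L : List (Sym2 V3)} {M : Multiset (Sym2 V3)}
    (T : TT φ u L M) {i l : ℕ} (hi : i < φ.n) (hl : 1 ≤ l) (hl' : l + 1 ≤ 6 * μ φ i) {a : Bool}
    (ha : Ent L a i l) : Ent L (!a) i (l + 1) := by
  obtain ⟨a', b, ha', hb, ⟨x, hx, hx'⟩, ⟨y, hy, hy'⟩⟩ := T.step hi hl hl'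
  obtain rfl := T.ent_unique ha ha'
  suffices (!a) = b by rwa [this]
  rcases T.partner hx with ⟨s, k, m, h⟩ | ⟨j, hj, hc, hp, hjl⟩
  · rw [hx' s k m h] at hx
    exact vv_vv T.hμ hl (T.hends _ _ hx).2.2
  rcases T.partner hy with ⟨s, k, m, h⟩ | ⟨j', hj', hc', hp', hjl'⟩
  · rw [hy' s k m h, Sym2.eq_swap] at hy
    exact vv_vv T.hμ hl (T.hends _ _ hy).2.2
  obtain rfl := posOf_inj (mem_occ hj hc) (mem_occ hj' hc') (by omega)
  exact taut_eq hj hc hc'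

theorem TT.parity {φ : CNF3} {u : V3} {L : List (Sym2 V3)} {M : Multiset (Sym2 V3)}
    (T : TT φ u L M) {i : ℕ} (hi : i < φ.n) {a : Bool} (ha : Ent L a i 1) (k : ℕ)
    (hk : 2 * k + 1 ≤ 6 * μ φ i) : Ent L a i (2 * k + 1) := by
  induction k with
  | zero => exact ha
  | succ k ih =>
    have h1 := T.alt hi (by omega) (by omega) (ih (by omega))
    have h2 := T.alt hi (by omega) (by omega) h1
    rwa [Bool.not_not] at h2

theorem TT.sat {φ : CNF3} {u : V3} {L : List (Sym2 V3)} {M : Multiset (Sym2 V3)}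
    (T : TT φ u L M) : Satisfiable φ := by
  classical
  refine ⟨fun i => decide (Ent L false i 1), fun j hj => ?_⟩
  have hjU : V3.c1 j ∈ Uset φ := by
    rw [mem_U]
    exact .inr ⟨j, hj, .inl rfl⟩
  obtain ⟨w, hw⟩ := T.hex _ hjU
  obtain ⟨-, hwU, hE⟩ := T.hends _ _ hw
  obtain ⟨-, i, s, hc, rfl⟩ := c1_mem_all hE hwU
  refine ⟨(i, s), hc, ?_⟩
  have hi : i < φ.n := φ.var_lt j hj _ hc
  have hp := posOf_pos (mem_occ hj hc)
  have hp' := posOf_le (φ := φ) (i := i) (j := j)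
  have hl1 : 6 * posOf φ i j - 4 + 1 = 6 * posOf φ i j - 3 := by omega
  have hno : ¬ Ent L s i (6 * posOf φ i j - 3) := by
    intro hent
    obtain ⟨a, b, ha, hb, ⟨x, hx, hx'⟩, -⟩ :=
      T.step (l := 6 * posOf φ i j - 4) hi (by omega) (by omega)
    rw [hl1] at hb hx'
    obtain rfl := T.ent_unique hent hb
    rcases T.partner hx with ⟨s', k, m, h⟩ | ⟨j', hj', hc', hq, hjl'⟩
    · rw [hx' s' k m h, Sym2.eq_swap] at hx
      rw [Sym2.eq_swap] at hw
      have := T.huniq _ hwU _ _ hx hw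
      simp at this
    · omega
  have hent1 : ∃ a, Ent L a i 1 := by
    have := T.hμ i hi
    obtain ⟨a, b, ha, -⟩ := T.step (l := 1) hi le_rfl (by omega)
    exact ⟨a, ha⟩
  obtain ⟨a, ha⟩ := hent1
  have h2 := T.parity hi ha (3 * posOf φ i j - 2) (by omega)
  rw [show 2 * (3 * posOf φ i j - 2) + 1 = 6 * posOf φ i j - 3 by omega] at h2
  have hne : a ≠ s := by
    rintro rfl
    exact hno h2
  cases s with
  | true =>
    have : a = false := by simpa using hne
    subst this
    simpa using ha
  | false =>
    have : a = true := by simpa using hne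
    subst this
    simp only [decide_eq_false_iff_not]
    intro h
    have := T.ent_unique ha h
    simp at this

theorem sat_of_tour (φ : CNF3) (hμ : ∀ i < φ.n, 1 ≤ μ φ i) {u : V3} {L : List (Sym2 V3)}
    (ht : Trail u L u) (hsub : ∀ e ∈ L, e ∈ Eall φ) (hcov : ∀ e ∈ Eall φ, e ∈ L)
    (hpr : PrecRespecting φ L) (hlen : 2 * L.length ≤ 2 * (Eall φ).card + imb φ) :
    Satisfiable φ := by
  obtain ⟨M, h1, h2, h3, h4, h5⟩ := exists_matching φ hμ ht hsub hcov hlen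
  exact TT.sat (u := u) (L := L) (M := M) ⟨hμ, ht, hsub, hcov, hpr.out, h1, h2, h3, h4, h5⟩

/-- The HCPP instance `I_φ` produced by the construction from a 3-CNF formula `φ`
(in which every variable occurs in some clause) admits a tight tour
if and only if `φ` is satisfiable. -/
theorem tight_tour_iff_satisfiable (φ : CNF3) (hμ : ∀ i < φ.n, 1 ≤ μ φ i) :
    (∃ T : List V3, IsTightTour φ T) ↔ Satisfiable φ := by
  rw [tight_iff]
  constructor
  · rintro ⟨u, L, ht, hsub, hcov, hpr, hlen⟩
    exact sat_of_tour φ hμ ht hsub hcov hpr hlen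
  · exact tour_of_sat φ hμ

end HCPPFormal
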